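/- arXiv:1104.4929 — 7 statements merged into one kernel-verified Lean document; each statement's English description precedes it below -/
import Mathlib

section
/- There exist a continuously differentiable function φ : ℝ → ℝ which is 1-periodic and satisfies ∫₀¹ φ(θ) dθ = 0, and a strictly increasing homeomorphism h̃ : ℝ → ℝ with h̃(x+1) = h̃(x)+1 for all x (the lift of an orientation-preserving circle homeomorphism h), such that: (i) h̃(x) + h̃⁻¹(x) = 2x + φ(x) for all x ∈ ℝ; (ii) the rotation (translation) number of h̃ is irrational, so that h has no periodic points; (iii) h is not minimal (it is a Denjoy counter-example: it is not topologically conjugate to the rotation by its rotation number); (iv) there is a point x₀ ∈ ℝ at which ψ := h̃ − id has distinct finite left and right derivatives; in particular ψ is 1-periodic, Lipschitz-graph-defining but not differentiable at x₀, while φ is C¹. -/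
open Filter Topology Set


/-- slowly varying positive sequences -/
def Good (C : ℝ) (x : ℤ → ℝ) : Prop :=
  ∀ n : ℤ, 0 < x n ∧ |x (n+1) - x n| * (1 + |(n:ℝ)|) ≤ C * x n ∧
    |x (n-1) - x n| * (1 + |(n:ℝ)|) ≤ C * x n ∧
    |x (n+1) + x (n-1) - 2 * x n| * (1 + |(n:ℝ)|)^2 ≤ C * x n

lemma good_mul {C D : ℝ} (hC : 0 ≤ C) (hD : 0 ≤ D) {x y : ℤ → ℝ} (hx : Good C x) (hy : Good D y) :
    Good (C + D + 2 * (C * D)) (fun n => x n * y n) := by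
  intro n
  beta_reduce
  obtain ⟨x0, x1, x2, x3⟩ := hx n
  obtain ⟨y0, y1, y2, y3⟩ := hy n
  have hm : (1:ℝ) ≤ 1 + |(n:ℝ)| := by linarith [abs_nonneg (n:ℝ)]
  generalize (1:ℝ) + |(n:ℝ)| = m at *
  have m0 : 0 < m := by linarith
  have key : ∀ p q : ℝ, |p - x n| * m ≤ C * x n → |q - y n| * m ≤ D * y n →
      |(p - x n) * (q - y n)| * m^2 ≤ (C * D) * (x n * y n) := by
    intro p q hp hq
    rw [abs_mul]
    calc |p - x n| * |q - y n| * m^2 = (|p - x n| * m) * (|q - y n| * m) := by ring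
      _ ≤ (C * x n) * (D * y n) := mul_le_mul hp hq (by positivity) (by positivity)
      _ = _ := by ring
  have key1 : ∀ p q : ℝ, |p - x n| * m ≤ C * x n → |q - y n| * m ≤ D * y n →
      |p * q - x n * y n| * m ≤ (C + D + 2 * (C * D)) * (x n * y n) := by
    intro p q hp hq
    have h1 := key p q hp hq
    have h2 : p * q - x n * y n = (p - x n) * y n + x n * (q - y n) + (p - x n) * (q - y n) := by ring
    have h3 : |p * q - x n * y n| ≤ |p - x n| * y n + x n * |q - y n| + |(p - x n) * (q - y n)| := by
      rw [h2]
      refine (abs_add_three _ _ _).trans ?_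
      rw [abs_mul _ (y n), abs_mul (x n), abs_of_pos x0, abs_of_pos y0]
    have h4 : |(p - x n) * (q - y n)| * m ≤ (C * D) * (x n * y n) := by
      refine le_trans ?_ h1
      apply mul_le_mul_of_nonneg_left _ (abs_nonneg _)
      nlinarith
    have h5 : 0 ≤ (C * D) * (x n * y n) := by positivity
    calc _ ≤ (|p - x n| * y n + x n * |q - y n| + |(p - x n) * (q - y n)|) * m := by gcongr
      _ = (|p - x n| * m) * y n + x n * (|q - y n| * m) + |(p - x n) * (q - y n)| * m := by ring
      _ ≤ (C * x n) * y n + x n * (D * y n) + (C * D) * (x n * y n) := by gcongr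
      _ ≤ _ := by linarith
  refine ⟨by positivity, key1 _ _ x1 y1, key1 _ _ x2 y2, ?_⟩
  have h1 := key _ _ x1 y1
  have h2 := key _ _ x2 y2
  have h3 : x (n+1) * y (n+1) + x (n-1) * y (n-1) - 2 * (x n * y n) =
    (x (n+1) + x (n-1) - 2 * x n) * y n + x n * (y (n+1) + y (n-1) - 2 * y n)
     + ((x (n+1) - x n) * (y (n+1) - y n) + (x (n-1) - x n) * (y (n-1) - y n)) := by ring
  have h4 : |x (n+1) * y (n+1) + x (n-1) * y (n-1) - 2 * (x n * y n)| ≤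
    |x (n+1) + x (n-1) - 2 * x n| * y n + x n * |y (n+1) + y (n-1) - 2 * y n|
     + (|(x (n+1) - x n) * (y (n+1) - y n)| + |(x (n-1) - x n) * (y (n-1) - y n)|) := by
    rw [h3]
    refine (abs_add_three _ _ _).trans ?_
    rw [abs_mul _ (y n), abs_mul (x n), abs_of_pos x0, abs_of_pos y0]
    gcongr
    exact abs_add_le _ _
  calc _ ≤ (|x (n+1) + x (n-1) - 2 * x n| * y n + x n * |y (n+1) + y (n-1) - 2 * y n|
     + (|(x (n+1) - x n) * (y (n+1) - y n)| + |(x (n-1) - x n) * (y (n-1) - y n)|)) * m^2 := by gcongr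
    _ = (|x (n+1) + x (n-1) - 2 * x n| * m^2) * y n + x n * (|y (n+1) + y (n-1) - 2 * y n| * m^2)
     + (|(x (n+1) - x n) * (y (n+1) - y n)| * m^2 + |(x (n-1) - x n) * (y (n-1) - y n)| * m^2) := by ring
    _ ≤ (C * x n) * y n + x n * (D * y n) + ((C * D) * (x n * y n) + (C * D) * (x n * y n)) := by gcongr
    _ = _ := by ring

lemma good_inv {C : ℝ} (hC : 0 ≤ C) {x : ℤ → ℝ} (hx : Good C x) :
    Good ((C + 2 * C^2) * (1+C)^2) (fun n => (x n)⁻¹) := by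
  intro n
  beta_reduce
  obtain ⟨x0, x1, x2, x3⟩ := hx n
  obtain ⟨u0, _, u2, _⟩ := hx (n+1)
  obtain ⟨v0, v1, _, _⟩ := hx (n-1)
  have e1 : x n ≤ (1 + C) * x (n+1) := by
    rw [add_sub_cancel_right] at u2
    have := le_abs_self (x n - x (n+1))
    have h : |x n - x (n+1)| * 1 ≤ |x n - x (n+1)| * (1 + |((n+1:ℤ):ℝ)|) := by
      gcongr; linarith [abs_nonneg ((n+1:ℤ):ℝ)]
    linarith
  have e2 : x n ≤ (1 + C) * x (n-1) := by
    rw [sub_add_cancel] at v1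
    have := le_abs_self (x n - x (n-1))
    have h : |x n - x (n-1)| * 1 ≤ |x n - x (n-1)| * (1 + |((n-1:ℤ):ℝ)|) := by
      gcongr; linarith [abs_nonneg ((n-1:ℤ):ℝ)]
    linarith
  have hm : (1:ℝ) ≤ 1 + |(n:ℝ)| := by linarith [abs_nonneg (n:ℝ)]
  generalize (1:ℝ) + |(n:ℝ)| = m at *
  have m0 : 0 < m := by linarith
  generalize x (n+1) = p at *
  generalize x (n-1) = q at *
  generalize x n = z at *
  have k1 : ∀ p : ℝ, 0 < p → z ≤ (1+C) * p → |p - z| * m ≤ C * z →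
      |p⁻¹ - z⁻¹| * m ≤ ((C + 2 * C^2) * (1+C)^2) * z⁻¹ := by
    intro p p0 hp h
    have h1 : p⁻¹ - z⁻¹ = - ((p - z) / (p * z)) := by field_simp; ring
    rw [h1, abs_neg, abs_div, abs_of_pos (mul_pos p0 x0), div_mul_eq_mul_div, div_le_iff₀ (by positivity)]
    have h2 : (C + 2 * C^2) * (1+C)^2 * z⁻¹ * (p * z) = (C + 2 * C^2) * (1+C) * ((1+C) * p) := by
      field_simp
    rw [h2]
    have : C ≤ (C + 2 * C^2) * (1+C) := by nlinarith [mul_nonneg hC hC, mul_nonneg (mul_nonneg hC hC) hC]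
    calc _ ≤ C * z := h
      _ ≤ _ := mul_le_mul this hp x0.le (by positivity)
  refine ⟨by positivity, k1 p u0 e1 x1, k1 q v0 e2 x2, ?_⟩
  have h1 : p⁻¹ + q⁻¹ - 2 * z⁻¹ = - ((z * (p + q - 2 * z) + 2 * ((p - z) * (q - z))) / (z * (p * q))) := by
    field_simp; ring
  rw [h1, abs_neg, abs_div, abs_of_pos (by positivity : 0 < z * (p * q)), div_mul_eq_mul_div,
    div_le_iff₀ (by positivity)]
  have h2 : (C + 2 * C^2) * (1+C)^2 * z⁻¹ * (z * (p * q)) = (C + 2 * C^2) * (((1+C) * p) * ((1+C) * q)) := by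
    field_simp
  rw [h2]
  have h3 : |z * (p + q - 2 * z) + 2 * ((p - z) * (q - z))| ≤ z * |p + q - 2 * z| + 2 * (|p - z| * |q - z|) := by
    refine (abs_add_le _ _).trans ?_
    rw [abs_mul, abs_mul, abs_mul, abs_of_pos x0, abs_of_pos (two_pos : (0:ℝ) < 2)]
  calc _ ≤ (z * |p + q - 2 * z| + 2 * (|p - z| * |q - z|)) * m^2 := by gcongr
    _ = z * (|p + q - 2 * z| * m^2) + 2 * ((|p - z| * m) * (|q - z| * m)) := by ring
    _ ≤ z * (C * z) + 2 * ((C * z) * (C * z)) := by gcongr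
    _ = (C + 2 * C^2) * (z * z) := by ring
    _ ≤ _ := by gcongr

lemma good_sq : Good 4 (fun n : ℤ => 1 + (n:ℝ)^2) := by
  intro n
  beta_reduce
  have h0 := abs_nonneg (n:ℝ)
  have h1 := sq_abs (n:ℝ)
  refine ⟨by positivity, ?_, ?_, ?_⟩
  · have : (1 + ((n+1:ℤ):ℝ)^2) - (1 + (n:ℝ)^2) = 2 * n + 1 := by push_cast; ring
    rw [this, ← h1]
    have h2 : |2 * (n:ℝ) + 1| ≤ 2 * |(n:ℝ)| + 1 := by
      refine (abs_add_le _ _).trans ?_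
      rw [abs_mul]; simp
    calc _ ≤ (2 * |(n:ℝ)| + 1) * (1 + |(n:ℝ)|) := by gcongr
      _ ≤ _ := by nlinarith [sq_nonneg (|(n:ℝ)| - 1)]
  · have : (1 + ((n-1:ℤ):ℝ)^2) - (1 + (n:ℝ)^2) = -(2 * n) + 1 := by push_cast; ring
    rw [this, ← h1]
    have h2 : |-(2 * (n:ℝ)) + 1| ≤ 2 * |(n:ℝ)| + 1 := by
      refine (abs_add_le _ _).trans ?_
      rw [abs_neg, abs_mul]; simp
    calc _ ≤ (2 * |(n:ℝ)| + 1) * (1 + |(n:ℝ)|) := by gcongr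
      _ ≤ _ := by nlinarith [sq_nonneg (|(n:ℝ)| - 1)]
  · have : (1 + ((n+1:ℤ):ℝ)^2) + (1 + ((n-1:ℤ):ℝ)^2) - 2 * (1 + (n:ℝ)^2) = 2 := by push_cast; ring
    rw [this, ← h1, abs_of_pos two_pos]
    nlinarith [sq_nonneg (|(n:ℝ)| - 1)]

lemma good_affine {C b : ℝ} (hC : 0 ≤ C) (hb : 0 ≤ b) {x : ℤ → ℝ} (hx : Good C x) :
    Good C (fun n => 1 + b * x n) := by
  intro n
  beta_reduce
  obtain ⟨x0, x1, x2, x3⟩ := hx n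
  have hh : C * (b * x n) ≤ C * (1 + b * x n) := by gcongr; linarith
  refine ⟨by positivity, ?_, ?_, ?_⟩
  · have : 1 + b * x (n+1) - (1 + b * x n) = b * (x (n+1) - x n) := by ring
    rw [this, abs_mul, abs_of_nonneg hb]
    nlinarith [mul_le_mul_of_nonneg_left x1 hb]
  · have : 1 + b * x (n-1) - (1 + b * x n) = b * (x (n-1) - x n) := by ring
    rw [this, abs_mul, abs_of_nonneg hb]
    nlinarith [mul_le_mul_of_nonneg_left x2 hb]
  · have : 1 + b * x (n+1) + (1 + b * x (n-1)) - 2 * (1 + b * x n) = b * (x (n+1) + x (n-1) - 2 * x n) := by ring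
    rw [this, abs_mul, abs_of_nonneg hb]
    nlinarith [mul_le_mul_of_nonneg_left x3 hb]

lemma good_num0 {c : ℝ} (hc : 0 ≤ c) (hc1 : c ≤ 1) : Good 1 (fun n : ℤ => 1 + max (c * n) 0) := by
  intro n
  beta_reduce
  refine ⟨by positivity, ?_⟩
  rcases lt_trichotomy n 0 with h | h | h
  · have h1 : (n:ℝ) + 1 ≤ 0 := by exact_mod_cast h
    have a1 : max (c * (n:ℝ)) 0 = 0 := max_eq_right (by nlinarith)
    have a2 : max (c * ((n+1:ℤ):ℝ)) 0 = 0 := max_eq_right (by push_cast; nlinarith)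
    have a3 : max (c * ((n-1:ℤ):ℝ)) 0 = 0 := max_eq_right (by push_cast; nlinarith)
    simp only [a1, a2, a3]
    norm_num
  · subst h
    simp
    rw [max_eq_left hc, max_eq_right (by linarith)]
    simp [abs_of_nonneg hc]
    norm_num
    refine ⟨hc1, ?_⟩
    rw [show 1 + c + 1 - 2 = c by ring, abs_of_nonneg hc]
    exact hc1
  · have h1 : (1:ℝ) ≤ n := by exact_mod_cast h
    have a1 : max (c * (n:ℝ)) 0 = c * n := max_eq_left (by nlinarith)
    have a2 : max (c * ((n+1:ℤ):ℝ)) 0 = c * (n + 1) := by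
      push_cast; exact max_eq_left (by nlinarith)
    have a3 : max (c * ((n-1:ℤ):ℝ)) 0 = c * (n - 1) := by
      push_cast; exact max_eq_left (by nlinarith)
    simp only [a1, a2, a3]
    rw [show (1 + c * ((n:ℝ) + 1) - (1 + c * n)) = c by ring, 
      show (1 + c * ((n:ℝ) - 1) - (1 + c * n)) = -c by ring,
      show (1 + c * ((n:ℝ) + 1) + (1 + c * (n-1)) - 2 * (1 + c * n)) = 0 by ring, abs_neg,
      abs_of_nonneg hc, abs_of_nonneg (by linarith : (0:ℝ) ≤ n)]
    refine ⟨by nlinarith, by nlinarith, ?_⟩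
    simp; nlinarith

lemma good_neg {C : ℝ} {x : ℤ → ℝ} (hx : Good C x) : Good C (fun n => x (-n)) := by
  intro n
  beta_reduce
  obtain ⟨x0, x1, x2, x3⟩ := hx (-n)
  have e1 : -(n+1) = -n - 1 := by ring
  have e2 : -(n-1) = -n + 1 := by ring
  simp only [Int.cast_neg, abs_neg] at x1 x2 x3
  refine ⟨x0, ?_, ?_, ?_⟩
  · rw [e1]; exact x2
  · rw [e2]; exact x1
  · rw [e1, e2, add_comm (x (-n-1))]; exact x3

lemma good_num {c : ℝ} (hc : |c| ≤ 1) : Good 1 (fun n : ℤ => 1 + max (c * n) 0) := by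
  rcases le_total 0 c with h | h
  · exact good_num0 h ((le_abs_self _).trans hc)
  · have := good_neg (good_num0 (c := -c) (by linarith) ((neg_le_abs c).trans hc))
    simpa using this

/-- weight profile -/
noncomputable def bet (c : ℝ) : ℝ := √(|c| * (1 - |c|))

/-- density profile -/
noncomputable def A (c : ℝ) (n : ℤ) : ℝ :=
  (1 + max (c * n) 0) * (1 + bet c * ((1 + (n:ℝ)^2) * (1 + (n:ℝ)^2)))⁻¹

lemma good_A : ∃ C : ℝ, 0 ≤ C ∧ ∀ c, |c| ≤ 1 → Good C (A c) := by
  refine ⟨_, ?_, fun c hc => good_mul (by norm_num) ?_ (good_num hc) 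
    (good_inv ?_ (good_affine (b := bet c) ?_ (Real.sqrt_nonneg _) (good_mul (by norm_num) (by norm_num) good_sq good_sq)))⟩
  all_goals norm_num

lemma A_pos (c : ℝ) (n : ℤ) : 0 < A c n := by
  have : 0 ≤ bet c := Real.sqrt_nonneg _
  unfold A
  positivity

lemma A_cont (n : ℤ) : Continuous (fun c => A c n) := by
  unfold A bet
  refine Continuous.mul (by fun_prop) (Continuous.inv₀ (by fun_prop) ?_)
  intro c
  positivity

lemma A_neg (c : ℝ) (n : ℤ) : A (-c) (-n) = A c n := by
  unfold A bet
  simp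

lemma A_one (n : ℤ) : A 1 n = 1 + max (n:ℝ) 0 := by
  unfold A bet; simp

lemma A_zero (n : ℤ) : A 0 n = 1 := by
  unfold A bet; simp

lemma A_negone (n : ℤ) : A (-1) n = 1 + max (-n:ℝ) 0 := by
  unfold A bet; simp

/-- relative second difference -/
noncomputable def Q (c : ℝ) (n : ℤ) : ℝ := (A c (n+1) + A c (n-1) - 2 * A c n) / A c n

lemma Q_cont (n : ℤ) : Continuous (fun c => Q c n) := by
  unfold Q
  have h := A_cont n
  have h1 := A_cont (n+1)
  have h2 := A_cont (n-1)
  exact Continuous.div (by fun_prop) h (fun c => (A_pos c n).ne')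

lemma Q_zero (n : ℤ) : Q 0 n = 0 := by
  unfold Q; simp [A_zero]; norm_num

lemma Q_one (n : ℤ) : Q 1 n = Q (-1) n := by
  unfold Q
  simp only [A_one, A_negone]
  rcases lt_trichotomy n 0 with h | h | h
  · have h1 : (n:ℝ) + 1 ≤ 0 := by exact_mod_cast h
    push_cast
    rw [max_eq_right h1, max_eq_right (by linarith : (n:ℝ) - 1 ≤ 0), max_eq_right (by linarith : (n:ℝ) ≤ 0),
      max_eq_left (by linarith : (0:ℝ) ≤ -(n+1)), max_eq_left (by linarith : (0:ℝ) ≤ -(n-1)), max_eq_left (by linarith : (0:ℝ) ≤ -n)]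
    rw [show (1 + (0:ℝ) + (1+0) - 2 * (1+0)) = 0 by ring, show (1 + -((n:ℝ)+1) + (1+ -((n:ℝ)-1)) - 2 * (1+ -(n:ℝ))) = 0 by ring]
    simp
  · subst h; norm_num
  · have h1 : (1:ℝ) ≤ n := by exact_mod_cast h
    push_cast
    rw [max_eq_left (by linarith : (0:ℝ) ≤ n+1), max_eq_left (by linarith : (0:ℝ) ≤ n - 1), max_eq_left (by linarith : (0:ℝ) ≤ n),
      max_eq_right (by linarith : -((n:ℝ)+1) ≤ 0), max_eq_right (by linarith : -((n:ℝ)-1) ≤ 0), max_eq_right (by linarith : -(n:ℝ) ≤ 0)]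
    rw [show (1 + (0:ℝ) + (1+0) - 2 * (1+0)) = 0 by ring, show (1 + ((n:ℝ)+1) + (1+ ((n:ℝ)-1)) - 2 * (1+ (n:ℝ))) = 0 by ring]
    simp

lemma Q_bound : ∃ C : ℝ, ∀ c, |c| ≤ 1 → ∀ n, |Q c n| ≤ C * (1 / (1 + |(n:ℝ)|)^2) := by
  obtain ⟨C, hC, h⟩ := good_A
  refine ⟨C, fun c hc n => ?_⟩
  have := (h c hc n).2.2.2
  unfold Q
  rw [abs_div, abs_of_pos (A_pos c n), div_le_iff₀ (A_pos c n), mul_one_div, div_mul_eq_mul_div, le_div_iff₀ (by positivity)]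
  exact this


/-- periodic density -/
noncomputable def aa (n : ℤ) (u : ℝ) : ℝ := A (1 - 2 * Int.fract u) n

/-- primitive of the density -/
noncomputable def gg (n : ℤ) (u : ℝ) : ℝ := ∫ t in (0:ℝ)..u, aa n t

/-- the abstract data used in the dynamical construction -/
structure GData where
  G : ℤ → ℝ → ℝ
  q : ℤ → ℝ → ℝ
  l : ℤ → ℝ
  B : ℤ → ℝ
  G_cont : ∀ n, Continuous (G n)
  G_mono : ∀ n, StrictMono (G n)
  G_add_one : ∀ n u, G n (u + 1) = G n u + l n
  G_zero : ∀ n, G n 0 = 0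
  l_sum : Summable (fun n : ℤ => l n * (1 + |(n:ℝ)|))
  l_lt : ∑' n, l n < 1
  G_symm : ∀ n u, G (-n) (-u) = - G n u
  q_cont : ∀ n, Continuous (q n)
  B_sum : Summable B
  q_le : ∀ n u, |q n u| ≤ B n
  q_half : ∀ (n k : ℤ), q n (k + 1/2) = 0
  G_diff : ∀ n u, ∀ ε > 0, ∀ᶠ u' in 𝓝 u,
    |((G (n+1) u' + G (n-1) u' - 2 * G n u') - (G (n+1) u + G (n-1) u - 2 * G n u))
      - q n u * (G n u' - G n u)| ≤ ε * |G n u' - G n u|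
  G_right : ∀ ε > 0, ∀ᶠ s in 𝓝[>] (0:ℝ), |G 1 s - 2 * G 0 s| ≤ ε * |G 0 s|
  G_left : ∀ ε > 0, ∀ᶠ s in 𝓝[<] (0:ℝ), |G 1 s - 1 * G 0 s| ≤ ε * |G 0 s|

lemma c_abs (u : ℝ) : |1 - 2 * Int.fract u| ≤ 1 := by
  have h1 := Int.fract_nonneg u
  have h2 := (Int.fract_lt_one u).le
  rw [abs_le]; constructor <;> linarith

lemma aa_pos (n : ℤ) (u : ℝ) : 0 < aa n u := A_pos _ _

lemma A_le {c : ℝ} (hc : |c| ≤ 1) (n : ℤ) : A c n ≤ (1 + |(n:ℝ)|) * (1 + bet c * ((1 + (n:ℝ)^2) * (1 + (n:ℝ)^2)))⁻¹ := by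
  have hb : 0 ≤ bet c := Real.sqrt_nonneg _
  unfold A
  gcongr
  apply max_le _ (abs_nonneg _)
  refine (le_abs_self _).trans ?_
  rw [abs_mul]
  nlinarith [abs_nonneg (n:ℝ), abs_nonneg c]

lemma aa_le (n : ℤ) (u : ℝ) : aa n u ≤ 1 + |(n:ℝ)| := by
  refine (A_le (c_abs u) n).trans ?_
  have hb : 0 ≤ bet (1 - 2 * Int.fract u) := Real.sqrt_nonneg _
  have : (1 + bet (1 - 2 * Int.fract u) * ((1 + (n:ℝ)^2) * (1 + (n:ℝ)^2)))⁻¹ ≤ 1 := by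
    apply inv_le_one_of_one_le₀
    have : 0 ≤ bet (1 - 2 * Int.fract u) * ((1 + (n:ℝ)^2) * (1 + (n:ℝ)^2)) := by positivity
    linarith
  exact mul_le_of_le_one_right (by positivity) this

lemma aa_meas (n : ℤ) : Measurable (aa n) := by
  unfold aa
  exact (A_cont n).measurable.comp (by fun_prop)

lemma aa_int (n : ℤ) (x y : ℝ) : IntervalIntegrable (aa n) MeasureTheory.volume x y := by
  refine (intervalIntegrable_const (c := 1 + |(n:ℝ)|)).mono_fun (aa_meas n).aestronglyMeasurable ?_
  refine Filter.Eventually.of_forall fun u => ?_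
  beta_reduce
  rw [Real.norm_of_nonneg (aa_pos n u).le, Real.norm_of_nonneg (by positivity)]
  exact aa_le n u

lemma gg_sub (n : ℤ) (u v : ℝ) : gg n v - gg n u = ∫ t in u..v, aa n t :=
  intervalIntegral.integral_interval_sub_left (aa_int n _ _) (aa_int n _ _)

lemma gg_cont (n : ℤ) : Continuous (gg n) := intervalIntegral.continuous_primitive (aa_int n) 0

lemma gg_mono (n : ℤ) : StrictMono (gg n) := by
  intro u v h
  rw [← sub_pos, gg_sub]
  exact intervalIntegral.intervalIntegral_pos_of_pos (aa_int n _ _) (aa_pos n) h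

lemma aa_per (n : ℤ) : Function.Periodic (aa n) 1 := by
  intro u; unfold aa; simp

lemma gg_add_one (n : ℤ) (u : ℝ) : gg n (u + 1) = gg n u + gg n 1 := by
  have h := (aa_per n).intervalIntegral_add_eq u 0
  rw [← gg_sub, zero_add, ← gg_sub] at h
  have : gg n 0 = 0 := by simp [gg]
  linarith

lemma gg_symm (n : ℤ) (u : ℝ) : gg (-n) (-u) = - gg n u := by
  have h1 : gg (-n) (-u) = ∫ t in u..0, aa (-n) (-t) := by
    rw [intervalIntegral.integral_comp_neg (fun t => aa (-n) t), neg_zero]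
    rfl
  rw [h1, gg, ← intervalIntegral.integral_symm]
  apply intervalIntegral.integral_congr_ae
  have hc : (Set.range ((↑) : ℤ → ℝ)).Countable := Set.countable_range _
  filter_upwards [hc.ae_notMem MeasureTheory.volume] with t ht _
  unfold aa
  have : Int.fract t ≠ 0 := by
    intro h
    rw [Int.fract_eq_zero_iff] at h
    exact ht h
  rw [Int.fract_neg this, ← A_neg, neg_neg]
  congr 1
  ring

lemma int_est {a b : ℝ → ℝ} {r ε u v : ℝ} (ha : IntervalIntegrable a MeasureTheory.volume u v)
    (hb : IntervalIntegrable b MeasureTheory.volume u v)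
    (hε : 0 < ε)
    (h : ∀ᵐ t, t ∈ Set.uIoc u v → |b t - r * a t| ≤ ε * a t) :
    |(∫ t in u..v, b t) - r * ∫ t in u..v, a t| ≤ ε * |∫ t in u..v, a t| := by
  rw [← intervalIntegral.integral_const_mul, ← intervalIntegral.integral_sub hb (ha.const_mul r)]
  have e : ε * |∫ t in u..v, a t| = |∫ t in u..v, ε * a t| := by
    rw [intervalIntegral.integral_const_mul, abs_mul, abs_of_pos hε]
  rw [e]
  rw [← Real.norm_eq_abs (∫ t in u..v, b t - r * a t)]
  apply intervalIntegral.norm_integral_le_abs_of_norm_le _ (ha.const_mul ε)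
  rw [MeasureTheory.ae_restrict_iff' measurableSet_uIoc]
  exact h

/-- continuous relative second difference -/
noncomputable def qq (n : ℤ) (u : ℝ) : ℝ := Q (1 - 2 * Int.fract u) n

lemma qq_cont (n : ℤ) : Continuous (qq n) := by
  have h : Continuous (fun v : ℝ => Q (1 - 2 * v) n) := (Q_cont n).comp (by fun_prop)
  refine ContinuousOn.comp_fract'' h.continuousOn ?_
  norm_num
  exact Q_one n

lemma gg_diff (n : ℤ) (u : ℝ) (ε : ℝ) (hε : 0 < ε) : ∀ᶠ u' in 𝓝 u,
    |((gg (n+1) u' + gg (n-1) u' - 2 * gg n u') - (gg (n+1) u + gg (n-1) u - 2 * gg n u))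
      - qq n u * (gg n u' - gg n u)| ≤ ε * |gg n u' - gg n u| := by
  obtain ⟨δ, hδ, h⟩ := Metric.continuousAt_iff.1 (qq_cont n).continuousAt ε hε
  filter_upwards [Metric.ball_mem_nhds u hδ] with u' hu'
  have e1 : (gg (n+1) u' + gg (n-1) u' - 2 * gg n u') - (gg (n+1) u + gg (n-1) u - 2 * gg n u)
      = ∫ t in u..u', (aa (n+1) t + aa (n-1) t - 2 * aa n t) := by
    rw [intervalIntegral.integral_sub ((aa_int _ _ _).add (aa_int _ _ _)) ((aa_int _ _ _).const_mul 2),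
      intervalIntegral.integral_add (aa_int _ _ _) (aa_int _ _ _), intervalIntegral.integral_const_mul,
      ← gg_sub, ← gg_sub, ← gg_sub]
    ring
  rw [e1, gg_sub]
  apply int_est (aa_int _ _ _) (((aa_int _ _ _).add (aa_int _ _ _)).sub ((aa_int _ _ _).const_mul 2)) hε
  refine Filter.Eventually.of_forall fun t ht => ?_
  have ht' : dist t u < δ := by
    refine lt_of_le_of_lt ?_ hu'
    have := Set.uIoc_subset_uIcc ht
    rw [Real.dist_eq, Real.dist_eq]
    exact Set.abs_sub_left_of_mem_uIcc this
  have h2 := h ht'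
  rw [Real.dist_eq] at h2
  have h3 : aa (n+1) t + aa (n-1) t - 2 * aa n t = qq n t * aa n t := by
    unfold qq Q aa
    rw [div_mul_cancel₀ _ (A_pos _ _).ne']
  rw [h3, ← sub_mul, abs_mul, abs_of_pos (aa_pos n t)]
  exact mul_le_mul_of_nonneg_right h2.le (aa_pos n t).le

lemma ratio_cont : Continuous (fun c => A c 1 / A c 0) :=
  (A_cont 1).div (A_cont 0) (fun c => (A_pos c 0).ne')

lemma gg_zero (n : ℤ) : gg n 0 = 0 := by simp [gg]

lemma gg_right (ε : ℝ) (hε : 0 < ε) : ∀ᶠ s in 𝓝[>] (0:ℝ), |gg 1 s - 2 * gg 0 s| ≤ ε * |gg 0 s| := by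
  have hc : ContinuousAt (fun v : ℝ => A (1 - 2 * v) 1 / A (1 - 2 * v) 0) 0 :=
    (ratio_cont.comp (by fun_prop : Continuous (fun v : ℝ => 1 - 2 * v))).continuousAt
  obtain ⟨δ, hδ, h⟩ := Metric.continuousAt_iff.1 hc ε hε
  have : Set.Ioo (0:ℝ) (min δ 1) ∈ 𝓝[>] (0:ℝ) := Ioo_mem_nhdsGT (by positivity)
  filter_upwards [this] with s hs
  apply int_est (aa_int _ _ _) (aa_int _ _ _) hε
  refine Filter.Eventually.of_forall fun t ht => ?_
  rw [Set.uIoc_of_le hs.1.le] at ht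
  have ht1 : t < 1 := lt_of_le_of_lt ht.2 (hs.2.trans_le (min_le_right _ _))
  have htd : t < δ := lt_of_le_of_lt ht.2 (hs.2.trans_le (min_le_left _ _))
  have hf : Int.fract t = t := Int.fract_eq_self.2 ⟨ht.1.le, ht1⟩
  have h2 := h (x := t) (by rw [Real.dist_eq, sub_zero, abs_of_pos ht.1]; exact htd)
  unfold aa
  rw [hf]
  norm_num [A_one, Real.dist_eq] at h2
  have h4 : A (1 - 2 * t) 1 - 2 * A (1 - 2 * t) 0 = (A (1 - 2 * t) 1 / A (1 - 2 * t) 0 - 2) * A (1 - 2 * t) 0 := by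
    rw [sub_mul, div_mul_cancel₀ _ (A_pos _ _).ne']
  rw [h4, abs_mul, abs_of_pos (A_pos _ 0)]
  exact mul_le_mul_of_nonneg_right h2.le (A_pos _ _).le

lemma gg_left (ε : ℝ) (hε : 0 < ε) : ∀ᶠ s in 𝓝[<] (0:ℝ), |gg 1 s - 1 * gg 0 s| ≤ ε * |gg 0 s| := by
  have hc : ContinuousAt (fun v : ℝ => A (1 - 2 * (v + 1)) 1 / A (1 - 2 * (v + 1)) 0) 0 :=
    (ratio_cont.comp (by fun_prop : Continuous (fun v : ℝ => 1 - 2 * (v + 1)))).continuousAt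
  obtain ⟨δ, hδ, h⟩ := Metric.continuousAt_iff.1 hc ε hε
  have : Set.Ioo (-(min δ 1)) (0:ℝ) ∈ 𝓝[<] (0:ℝ) := Ioo_mem_nhdsLT (by simp [hδ])
  filter_upwards [this] with s hs
  apply int_est (aa_int _ _ _) (aa_int _ _ _) hε
  filter_upwards [MeasureTheory.Measure.ae_ne MeasureTheory.volume (0:ℝ)] with t ht0 ht
  rw [Set.uIoc_of_ge hs.2.le] at ht
  have ht0' : t < 0 := lt_of_le_of_ne ht.2 ht0
  have ht1 : -1 < t := by
    have := min_le_right δ 1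
    linarith [hs.1, ht.1]
  have htd : -δ < t := by
    have := min_le_left δ 1
    linarith [hs.1, ht.1]
  have hf : Int.fract t = t + 1 := by
    rw [← Int.fract_add_one, Int.fract_eq_self]
    constructor <;> linarith
  have h2 := h (x := t) (by rw [Real.dist_eq, sub_zero, abs_of_neg ht0']; linarith)
  unfold aa
  rw [hf]
  norm_num [A_negone, Real.dist_eq] at h2
  have h4 : A (1 - 2 * (t + 1)) 1 - 1 * A (1 - 2 * (t + 1)) 0 = (A (1 - 2 * (t + 1)) 1 / A (1 - 2 * (t + 1)) 0 - 1) * A (1 - 2 * (t + 1)) 0 := by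
    rw [sub_mul, div_mul_cancel₀ _ (A_pos _ _).ne']
  rw [h4, abs_mul, abs_of_pos (A_pos _ 0)]
  exact mul_le_mul_of_nonneg_right h2.le (A_pos _ _).le

lemma abs_rpow_int : IntervalIntegrable (fun x : ℝ => |x| ^ (-(1/2):ℝ)) MeasureTheory.volume (-1) 1 := by
  have h0 : IntervalIntegrable (fun x : ℝ => |x| ^ (-(1/2):ℝ)) MeasureTheory.volume 0 1 := by
    refine (intervalIntegral.intervalIntegrable_rpow' (a := 0) (b := 1) (by norm_num : -1 < (-(1/2):ℝ))).congr ?_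
    intro x hx
    rw [Set.uIoc_of_le zero_le_one] at hx
    simp [abs_of_pos hx.1]
  have h1 : IntervalIntegrable (fun x : ℝ => |x| ^ (-(1/2):ℝ)) MeasureTheory.volume (-1) 0 := by
    have := h0.comp_sub_left 0
    simp at this
    simpa using this.symm
  exact h1.trans h0

lemma bet_aux {v : ℝ} (v0 : 0 < v) (v1 : v < 1) (v2 : v ≠ 1/2) :
    0 < |1 - 2 * v| ∧ 0 < 1 - |1 - 2 * v| := by
  constructor
  · rw [abs_pos]; intro h; apply v2; linarith
  · rw [sub_pos, abs_lt]; constructor <;> linarith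

lemma rpow_half {x : ℝ} (hx : 0 < x) : |x| ^ (-(1/2):ℝ) = (√x)⁻¹ := by
  rw [abs_of_pos hx, Real.rpow_neg hx.le, Real.sqrt_eq_rpow]

lemma bet_inv_le {v : ℝ} (v0 : 0 < v) (v1 : v < 1) (v2 : v ≠ 1/2) :
    (bet (1 - 2 * v))⁻¹ ≤ |1 - 2 * v| ^ (-(1/2):ℝ) + (|v| ^ (-(1/2):ℝ) + |1 - v| ^ (-(1/2):ℝ)) := by
  obtain ⟨p0, r0⟩ := bet_aux v0 v1 v2
  have hr : (√(1 - |1 - 2 * v|))⁻¹ ≤ |v| ^ (-(1/2):ℝ) + |1 - v| ^ (-(1/2):ℝ) := by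
    rw [rpow_half v0, rpow_half (by linarith : 0 < 1 - v)]
    have w0 : 0 < 1 - v := by linarith
    rcases le_total v (1/2) with h | h
    · have : v ≤ 1 - |1 - 2 * v| := by rw [abs_of_nonneg (by linarith)]; linarith
      have h1 : (√(1 - |1 - 2 * v|))⁻¹ ≤ (√v)⁻¹ := by gcongr
      have h2 : 0 ≤ (√(1 - v))⁻¹ := by positivity
      linarith
    · have : 1 - v ≤ 1 - |1 - 2 * v| := by rw [abs_of_nonpos (by linarith)]; linarith
      have h1 : (√(1 - |1 - 2 * v|))⁻¹ ≤ (√(1 - v))⁻¹ := by gcongr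
      have h2 : 0 ≤ (√v)⁻¹ := by positivity
      linarith
  have hp : |1 - 2 * v| ^ (-(1/2):ℝ) = (√|1 - 2 * v|)⁻¹ := by
    rw [← rpow_half p0, abs_abs]
  rw [hp]
  refine le_trans ?_ (add_le_add_right hr _)
  unfold bet
  generalize |1 - 2 * v| = p at *
  rw [Real.sqrt_mul p0.le]
  have a1 : p ≤ √p := Real.le_sqrt_of_sq_le (by nlinarith)
  have a2 : 1 - p ≤ √(1 - p) := Real.le_sqrt_of_sq_le (by nlinarith)
  have b1 : 0 < √p := Real.sqrt_pos.2 p0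
  have b2 : 0 < √(1 - p) := Real.sqrt_pos.2 r0
  rw [inv_add_inv b1.ne' b2.ne', inv_eq_one_div]
  gcongr
  linarith

lemma gg_one_le : ∃ M : ℝ, ∀ n : ℤ, gg n 1 ≤ M * ((1 + |(n:ℝ)|) * ((1 + (n:ℝ)^2) * (1 + (n:ℝ)^2))⁻¹) := by
  have i1 : IntervalIntegrable (fun v : ℝ => |1 - 2 * v| ^ (-(1/2):ℝ)) MeasureTheory.volume 0 1 := by
    have := (abs_rpow_int.comp_sub_left 1).comp_mul_left (c := 2)
    norm_num at this
    exact this.symm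
  have i2 : IntervalIntegrable (fun v : ℝ => |v| ^ (-(1/2):ℝ)) MeasureTheory.volume 0 1 :=
    abs_rpow_int.mono_set (by rw [Set.uIcc_of_le, Set.uIcc_of_le] <;> [apply Set.Icc_subset_Icc; skip; skip] <;> norm_num)
  have i3 : IntervalIntegrable (fun v : ℝ => |1 - v| ^ (-(1/2):ℝ)) MeasureTheory.volume 0 1 := by
    have := i2.comp_sub_left 1
    norm_num at this
    exact this.symm
  refine ⟨∫ v in (0:ℝ)..1, (|1 - 2 * v| ^ (-(1/2):ℝ) + (|v| ^ (-(1/2):ℝ) + |1 - v| ^ (-(1/2):ℝ))), fun n => ?_⟩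
  set N : ℝ := (1 + (n:ℝ)^2) * (1 + (n:ℝ)^2) with hN
  have N0 : 0 < N := by positivity
  rw [← intervalIntegral.integral_mul_const]
  unfold gg
  apply intervalIntegral.integral_mono_ae_restrict zero_le_one (aa_int _ _ _) ((i1.add (i2.add i3)).mul_const _)
  rw [Filter.EventuallyLE, MeasureTheory.ae_restrict_iff' measurableSet_Icc]
  filter_upwards [MeasureTheory.Measure.ae_ne MeasureTheory.volume (0:ℝ),
    MeasureTheory.Measure.ae_ne MeasureTheory.volume (1:ℝ),
    MeasureTheory.Measure.ae_ne MeasureTheory.volume (1/2:ℝ)] with v hv0 hv1 hv2 hv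
  have v0 : 0 < v := lt_of_le_of_ne hv.1 (Ne.symm hv0)
  have v1 : v < 1 := lt_of_le_of_ne hv.2 hv1
  have hf : Int.fract v = v := Int.fract_eq_self.2 ⟨v0.le, v1⟩
  have hb := bet_inv_le v0 v1 hv2
  refine (A_le (c_abs v) n).trans ?_
  rw [hf]
  have b0 : 0 < bet (1 - 2 * v) := by
    unfold bet
    have := bet_aux v0 v1 hv2
    exact Real.sqrt_pos.2 (mul_pos this.1 this.2)
  calc _ ≤ (1 + |(n:ℝ)|) * (bet (1 - 2 * v) * N)⁻¹ := by gcongr; linarith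
    _ = (bet (1 - 2 * v))⁻¹ * ((1 + |(n:ℝ)|) * N⁻¹) := by rw [mul_inv]; ring
    _ ≤ _ := by gcongr

lemma scale_abs {d X Y X' Y' ε : ℝ} (hd : 0 < d) (h : |X| ≤ ε * |Y|) (hX : X' = d * X) (hY : Y' = d * Y) :
    |X'| ≤ ε * |Y'| := by
  rw [hX, hY, abs_mul, abs_mul, abs_of_pos hd]
  nlinarith [mul_le_mul_of_nonneg_left h hd.le]

theorem exists_GData : Nonempty GData := by
  obtain ⟨M, hM⟩ := gg_one_le
  obtain ⟨C, hC⟩ := Q_bound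
  have hs2 : Summable (fun n : ℤ => 1 / (1 + |(n:ℝ)|)^2) := by
    have hn : Summable (fun n : ℕ => 1 / ((n:ℝ) + 1)^2) := by
      have := (summable_nat_add_iff 1).2 (Real.summable_one_div_nat_pow.2 (by norm_num : 1 < 2))
      simpa using this
    refine Summable.of_nat_of_neg ?_ ?_
    · refine hn.congr fun n => ?_
      simp [add_comm]
    · refine hn.congr fun n => ?_
      simp [add_comm]
  have l0 : ∀ n, 0 < gg n 1 := fun n => by
    have := gg_mono n zero_lt_one
    rwa [gg_zero] at this
  have hM0 : 0 ≤ M := by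
    have h1 := hM 0
    have h2 := l0 0
    norm_num at h1
    linarith
  have hsum : Summable (fun n : ℤ => gg n 1 * (1 + |(n:ℝ)|)) := by
    refine Summable.of_nonneg_of_le (fun n => mul_nonneg (l0 n).le (by positivity)) (fun n => ?_) (hs2.mul_left (4 * M))
    have h1 := mul_le_mul_of_nonneg_right (hM n) (by positivity : 0 ≤ 1 + |(n:ℝ)|)
    refine h1.trans ?_
    have h2 : (1 + |(n:ℝ)|)^2 ≤ 2 * (1 + (n:ℝ)^2) := by
      rw [← sq_abs (n:ℝ)]; nlinarith [sq_nonneg (|(n:ℝ)| - 1)]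
    have h3 : (1 + |(n:ℝ)|)^2 * (1 + |(n:ℝ)|)^2 ≤ (2 * (1 + (n:ℝ)^2)) * (2 * (1 + (n:ℝ)^2)) := by gcongr
    have h4 : (1 + |(n:ℝ)|) * ((1 + (n:ℝ)^2) * (1 + (n:ℝ)^2))⁻¹ * (1 + |(n:ℝ)|) ≤ 4 * (1 / (1 + |(n:ℝ)|)^2) := by
      rw [mul_one_div, le_div_iff₀ (by positivity), mul_right_comm, mul_right_comm, ← div_eq_mul_inv, div_mul_eq_mul_div, div_mul_eq_mul_div, div_le_iff₀ (by positivity)]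
      nlinarith
    calc _ = M * ((1 + |(n:ℝ)|) * ((1 + (n:ℝ)^2) * (1 + (n:ℝ)^2))⁻¹ * (1 + |(n:ℝ)|)) := by ring
      _ ≤ M * (4 * (1 / (1 + |(n:ℝ)|)^2)) := by gcongr
      _ = _ := by ring
  have hsum1 : Summable (fun n : ℤ => gg n 1) := by
    refine Summable.of_nonneg_of_le (fun n => (l0 n).le) (fun n => ?_) hsum
    have := abs_nonneg (n:ℝ)
    nlinarith [l0 n]
  have hT : 0 ≤ ∑' n, gg n 1 := tsum_nonneg fun n => (l0 n).le
  set d : ℝ := 1 / (1 + ∑' n, gg n 1) with hd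
  have d0 : 0 < d := by positivity
  exact ⟨{
    G := fun n u => d * gg n u
    q := qq
    l := fun n => d * gg n 1
    B := fun n => C * (1 / (1 + |(n:ℝ)|)^2)
    G_cont := fun n => continuous_const.mul (gg_cont n)
    G_mono := fun n => (gg_mono n).const_mul d0
    G_add_one := fun n u => by rw [gg_add_one]; ring
    G_zero := fun n => by simp [gg_zero]
    l_sum := by simpa [mul_assoc] using hsum.mul_left d
    l_lt := by
      rw [tsum_mul_left, hd, one_div_mul_eq_div, div_lt_one (by positivity)]
      linarith
    G_symm := fun n u => by rw [gg_symm]; ring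
    q_cont := qq_cont
    B_sum := hs2.mul_left C
    q_le := fun n u => hC _ (c_abs u) n
    q_half := fun n k => by
      unfold qq
      have : Int.fract ((k:ℝ) + 1/2) = 1/2 := by
        rw [Int.fract_intCast_add, Int.fract_eq_self]; norm_num
      rw [this]; norm_num; exact Q_zero n
    G_diff := fun n u ε hε => by
      filter_upwards [gg_diff n u ε hε] with u' h
      exact scale_abs d0 h (by ring) (by ring)
    G_right := fun ε hε => by
      filter_upwards [gg_right ε hε] with s h
      exact scale_abs d0 h (by ring) (by ring)
    G_left := fun ε hε => by
      filter_upwards [gg_left ε hε] with s h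
      exact scale_abs d0 h (by ring) (by ring) }⟩


/-- position inside the blown-up integer lattice -/
noncomputable def E (z s : ℝ) : ℝ := if (⌊z⌋ : ℝ) = z then z + s else ⌊z⌋ + 1/2

lemma E_int (k : ℤ) (s : ℝ) : E k s = k + s := by simp [E]

lemma E_le (z s : ℝ) (hs : |s| ≤ 1/2) : E z s ≤ ⌊z⌋ + 1/2 := by
  unfold E
  split_ifs with h
  · rw [h]; linarith [(abs_le.1 hs).2]
  · exact le_rfl

lemma ceil_of_not {z : ℝ} (h : ¬ (⌊z⌋ : ℝ) = z) : ⌈z⌉ = ⌊z⌋ + 1 := by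
  rw [Int.ceil_eq_iff]
  have h1 := Int.floor_le z
  have h2 := Int.lt_floor_add_one z
  push_cast
  exact ⟨by simpa using lt_of_le_of_ne h1 h, h2.le⟩

lemma ceil_of {z : ℝ} (h : (⌊z⌋ : ℝ) = z) : (⌈z⌉ : ℝ) = z := by
  rw [← h]; simp

lemma le_E (z s : ℝ) (hs : |s| ≤ 1/2) : ⌈z⌉ - 1/2 ≤ E z s := by
  unfold E
  split_ifs with h
  · rw [ceil_of h]; linarith [(abs_le.1 hs).1]
  · rw [ceil_of_not h]; push_cast; linarith

lemma E_bot (z : ℝ) : E z (-(1/2)) = ⌈z⌉ - 1/2 := by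
  unfold E
  split_ifs with h
  · rw [ceil_of h]; ring
  · rw [ceil_of_not h]; push_cast; ring

lemma E_top (z : ℝ) : E z (1/2) = ⌊z⌋ + 1/2 := by
  unfold E
  split_ifs with h
  · rw [h]
  · rfl

lemma E_lt {z z' s s' : ℝ} (h : z < z') (hs : |s| ≤ 1/2) (hs' : |s'| ≤ 1/2) : E z s ≤ E z' s' := by
  refine (E_le z s hs).trans (le_trans ?_ (le_E z' s' hs'))
  have : ⌊z⌋ + 1 ≤ ⌈z'⌉ := by
    have : (⌊z⌋:ℝ) < ⌈z'⌉ := (Int.floor_le z).trans_lt (h.trans_le (Int.le_ceil z'))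
    exact_mod_cast this
  have : (⌊z⌋:ℝ) + 1 ≤ ⌈z'⌉ := by exact_mod_cast this
  linarith

lemma E_mono {z s s' : ℝ} (h : s ≤ s') : E z s ≤ E z s' := by
  unfold E
  split_ifs <;> linarith

lemma E_neg (z s : ℝ) : E (-z) (-s) = - E z s := by
  unfold E
  by_cases h : (⌊z⌋ : ℝ) = z
  · have h' : (⌊-z⌋ : ℝ) = -z := by rw [Int.floor_neg]; push_cast; rw [ceil_of h]
    rw [if_pos h, if_pos h']; ring
  · have h' : ¬ (⌊-z⌋ : ℝ) = -z := by
      rw [Int.floor_neg]; push_cast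
      intro h2
      rw [ceil_of_not h] at h2
      push_cast at h2
      have := Int.lt_floor_add_one z
      linarith
    rw [if_neg h, if_neg h', Int.floor_neg, ceil_of_not h]; push_cast; ring

lemma E_add_one (z s : ℝ) : E (z + 1) s = E z s + 1 := by
  unfold E
  simp only [Int.floor_add_one]
  push_cast
  by_cases h : (⌊z⌋ : ℝ) = z
  · rw [if_pos h, if_pos (by rw [h])]; ring
  · rw [if_neg h, if_neg (by intro h'; apply h; linarith)]; ring

lemma E_abs (z s : ℝ) (hs : |s| ≤ 1/2) : |E z s| ≤ |z| + 1/2 := by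
  have h1 := E_le z s hs
  have h2 := le_E z s hs
  have h3 := Int.floor_le z
  have h4 := Int.le_ceil z
  rw [abs_le]
  constructor <;> linarith [neg_abs_le z, le_abs_self z]

lemma E_mid {z s : ℝ} {k : ℤ} (hs : |s| ≤ 1/2) (h1 : k - 1/2 < E z s) (h2 : E z s < k + 1/2) : z = k := by
  have h3 := E_le z s hs
  have h4 := le_E z s hs
  have h5 : k - 1 < ⌊z⌋ := by
    have : (k:ℝ) - 1 < ⌊z⌋ := by linarith
    exact_mod_cast this
  have h6 : ⌈z⌉ < k + 1 := by
    have : (⌈z⌉:ℝ) < k + 1 := by linarith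
    exact_mod_cast this
  have h7 : (k:ℝ) ≤ ⌊z⌋ := by exact_mod_cast (by omega : k ≤ ⌊z⌋)
  have h8 : (⌈z⌉:ℝ) ≤ k := by exact_mod_cast (by omega : ⌈z⌉ ≤ k)
  have := Int.floor_le z
  have := Int.le_ceil z
  linarith

lemma E_indep {z s s' : ℝ} (h : ¬ (⌊z⌋ : ℝ) = z) : E z s = E z s' := by
  unfold E; rw [if_neg h, if_neg h]

lemma E_cont (z : ℝ) : Continuous (fun s => E z s) := by
  unfold E
  split_ifs <;> fun_prop

lemma E_bot_left (z : ℝ) : ∀ᶠ z' in 𝓝[≤] z, E z' (-(1/2)) = E z (-(1/2)) := by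
  have : Set.Ioc ((⌈z⌉:ℝ) - 1) z ∈ 𝓝[≤] z := Ioc_mem_nhdsLE (by linarith [Int.ceil_lt_add_one z])
  filter_upwards [this] with z' hz'
  rw [E_bot, E_bot]
  have : ⌈z'⌉ = ⌈z⌉ := by
    rw [Int.ceil_eq_iff]
    exact ⟨hz'.1, hz'.2.trans (Int.le_ceil z)⟩
  rw [this]

lemma E_top_right (z : ℝ) : ∀ᶠ z' in 𝓝[>] z, E z' (1/2) = E z (1/2) := by
  have : Set.Ioo z ((⌊z⌋:ℝ) + 1) ∈ 𝓝[>] z := Ioo_mem_nhdsGT (by linarith [Int.lt_floor_add_one z])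
  filter_upwards [this] with z' hz'
  rw [E_top, E_top]
  have : ⌊z'⌋ = ⌊z⌋ := by
    rw [Int.floor_eq_iff]
    exact ⟨(Int.floor_le z).trans hz'.1.le, hz'.2⟩
  rw [this]

/-- rotation number -/
noncomputable def rho : ℝ := √2

lemma rho_irr : Irrational rho := irrational_sqrt_two

lemma rho_pos : 0 < rho := Real.sqrt_pos.2 two_pos

/-- position with respect to the n-th orbit of gaps -/
noncomputable def sig (n : ℤ) (t s : ℝ) : ℝ := E (t - n * rho) s

lemma sig_shift (n : ℤ) (t s : ℝ) : sig (n+1) (t + rho) s = sig n t s := by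
  unfold sig; push_cast; congr 1; ring

lemma sig_add_one (n : ℤ) (t s : ℝ) : sig n (t + 1) s = sig n t s + 1 := by
  unfold sig; rw [← E_add_one]; congr 1; ring

lemma sig_neg (n : ℤ) (t s : ℝ) : sig (-n) (-t) (-s) = - sig n t s := by
  unfold sig; rw [← E_neg]; congr 1; push_cast; ring

namespace GData
variable (D : GData)

lemma l_pos (n : ℤ) : 0 < D.l n := by
  have h := D.G_add_one n 0
  have h2 := D.G_mono n (show (0:ℝ) < 0 + 1 by norm_num)
  linarith

lemma G_int (n : ℤ) (k : ℤ) : D.G n k = k * D.l n := by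
  induction k using Int.induction_on with
  | zero => simp [D.G_zero]
  | succ i ih => push_cast at ih ⊢; rw [D.G_add_one, ih]; ring
  | pred i ih =>
    have := D.G_add_one n (-(i:ℝ) - 1)
    rw [sub_add_cancel] at this
    push_cast at ih ⊢; rw [ih] at this; linarith

lemma G_abs (n : ℤ) (u : ℝ) : |D.G n u| ≤ D.l n * (|u| + 1) := by
  have h0 := D.l_pos n
  have h1 : D.G n u ≤ D.G n ⌈u⌉ := (D.G_mono n).monotone (Int.le_ceil u)
  have h2 : D.G n ⌊u⌋ ≤ D.G n u := (D.G_mono n).monotone (Int.floor_le u)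
  rw [G_int] at h1 h2
  have h3 := Int.ceil_lt_add_one u
  have h4 := Int.sub_one_lt_floor u
  rw [abs_le]
  constructor
  · nlinarith [neg_abs_le u]
  · nlinarith [le_abs_self u]

/-- Lebesgue weight of the minimal set -/
noncomputable def kap : ℝ := 1 - ∑' n, D.l n

lemma kap_pos : 0 < D.kap := sub_pos.2 D.l_lt

lemma l_summable : Summable D.l := by
  refine Summable.of_nonneg_of_le (fun n => (D.l_pos n).le) (fun n => ?_) D.l_sum
  nlinarith [D.l_pos n, abs_nonneg (n:ℝ)]

lemma term_le {T t s : ℝ} (ht : |t| ≤ T) (hs : |s| ≤ 1/2) (n : ℤ) :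
    |D.G n (sig n t s)| ≤ D.l n * (1 + |(n:ℝ)|) * (T + rho + 2) := by
  refine (D.G_abs n _).trans ?_
  rw [mul_assoc]
  apply mul_le_mul_of_nonneg_left _ (D.l_pos n).le
  have h1 : |sig n t s| ≤ |t - n * rho| + 1/2 := E_abs _ _ hs
  have h2 : |t - n * rho| ≤ |t| + |(n:ℝ)| * rho := by
    refine (abs_sub _ _).trans ?_
    rw [abs_mul, abs_of_pos rho_pos]
  have := abs_nonneg (n:ℝ)
  have := abs_nonneg t
  nlinarith [rho_pos]

lemma term_summable (t : ℝ) {s : ℝ} (hs : |s| ≤ 1/2) : Summable (fun n => D.G n (sig n t s)) :=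
  Summable.of_norm_bounded (D.l_sum.mul_right _) (fun n => D.term_le le_rfl hs n)

/-- the parametrisation of the line -/
noncomputable def K (t s : ℝ) : ℝ := D.kap * t + ∑' n, D.G n (sig n t s)

lemma K_tendsto {ι : Type*} {F : Filter ι} {t s : ι → ℝ} {t0 s0 : ℝ} (hs : ∀ᶠ i in F, |s i| ≤ 1/2)
    (ht : Tendsto t F (𝓝 t0)) (hsig : ∀ n, Tendsto (fun i => sig n (t i) (s i)) F (𝓝 (sig n t0 s0))) :
    Tendsto (fun i => D.K (t i) (s i)) F (𝓝 (D.K t0 s0)) := by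
  unfold K
  refine (ht.const_mul _).add ?_
  have hT : ∀ᶠ i in F, |t i| ≤ |t0| + 1 := by
    have := ht.abs.eventually_lt_const (show |t0| < |t0| + 1 by linarith)
    filter_upwards [this] with i hi using hi.le
  refine tendsto_tsum_of_dominated_convergence (D.l_sum.mul_right (|t0| + 1 + rho + 2)) ?_ ?_
  · intro n
    exact ((D.G_cont n).tendsto _).comp (hsig n)
  · filter_upwards [hs, hT] with i h1 h2 n
    exact D.term_le h2 h1 n

lemma K_mono {t s t' s' : ℝ} (hs : |s| ≤ 1/2) (hs' : |s'| ≤ 1/2) (ht : t ≤ t')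
    (h : ∀ n, sig n t s ≤ sig n t' s') : D.K t s ≤ D.K t' s' := by
  unfold K
  have h1 := mul_le_mul_of_nonneg_left ht D.kap_pos.le
  have h2 := (D.term_summable t hs).tsum_le_tsum (fun n => (D.G_mono n).monotone (h n)) (D.term_summable t' hs')
  linarith

lemma K_mono_eq {t s t' s' : ℝ} (hs : |s| ≤ 1/2) (hs' : |s'| ≤ 1/2) (ht : t ≤ t')
    (h : ∀ n, sig n t s ≤ sig n t' s') (he : D.K t' s' ≤ D.K t s) :
    t = t' ∧ ∀ n, sig n t s = sig n t' s' := by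
  unfold K at he
  have h1 := mul_le_mul_of_nonneg_left ht D.kap_pos.le
  have h2 := (D.term_summable t hs).tsum_le_tsum (fun n => (D.G_mono n).monotone (h n)) (D.term_summable t' hs')
  have e1 : D.kap * t = D.kap * t' := by linarith
  refine ⟨mul_left_cancel₀ D.kap_pos.ne' e1, fun n => ?_⟩
  by_contra hne
  have hlt := D.G_mono n (lt_of_le_of_ne (h n) hne)
  have := (D.term_summable t hs).tsum_lt_tsum (fun n => (D.G_mono n).monotone (h n)) hlt (D.term_summable t' hs')
  linarith

lemma sig_total {t s t' s' : ℝ} (hs : |s| ≤ 1/2) (hs' : |s'| ≤ 1/2) :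
    (t ≤ t' ∧ ∀ n, sig n t s ≤ sig n t' s') ∨ (t' ≤ t ∧ ∀ n, sig n t' s' ≤ sig n t s) := by
  rcases lt_trichotomy t t' with h | h | h
  · exact Or.inl ⟨h.le, fun n => E_lt (by linarith) hs hs'⟩
  · subst h
    rcases le_total s s' with h | h
    · exact Or.inl ⟨le_rfl, fun n => E_mono h⟩
    · exact Or.inr ⟨le_rfl, fun n => E_mono h⟩
  · exact Or.inr ⟨h.le, fun n => E_lt (by linarith) hs' hs⟩

lemma K_le_iff {t s t' s' : ℝ} (hs : |s| ≤ 1/2) (hs' : |s'| ≤ 1/2) :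
    D.K t s ≤ D.K t' s' ↔ (t ≤ t' ∧ ∀ n, sig n t s ≤ sig n t' s') := by
  constructor
  · intro h
    rcases sig_total (t := t) (t' := t') hs hs' with h1 | h1
    · exact h1
    · obtain ⟨e1, e2⟩ := D.K_mono_eq hs' hs h1.1 h1.2 h
      exact ⟨e1.symm.le, fun n => (e2 n).symm.le⟩
  · rintro ⟨h1, h2⟩
    exact D.K_mono hs hs' h1 h2

lemma K_eq {t s t' s' : ℝ} (hs : |s| ≤ 1/2) (hs' : |s'| ≤ 1/2) (h : D.K t s = D.K t' s') :
    t = t' ∧ ∀ n, sig n t s = sig n t' s' := by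
  have h1 := (D.K_le_iff hs hs').1 h.le
  have h2 := (D.K_le_iff hs' hs).1 h.ge
  exact ⟨le_antisymm h1.1 h2.1, fun n => le_antisymm (h1.2 n) (h2.2 n)⟩

lemma K_neg (t s : ℝ) : D.K (-t) (-s) = - D.K t s := by
  unfold K
  have : ∑' n, D.G n (sig n (-t) (-s)) = - ∑' n, D.G n (sig n t s) := by
    rw [← tsum_neg, ← (Equiv.neg ℤ).tsum_eq]
    congr 1
    ext n
    simp only [Equiv.neg_apply]
    rw [sig_neg, D.G_symm]
  rw [this]; ring

lemma K_add_one (t : ℝ) {s : ℝ} (hs : |s| ≤ 1/2) : D.K (t + 1) s = D.K t s + 1 := by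
  unfold K
  simp only [sig_add_one, D.G_add_one]
  rw [(D.term_summable t hs).tsum_add D.l_summable]
  unfold kap
  ring

lemma K_add_int (t : ℝ) {s : ℝ} (hs : |s| ≤ 1/2) (k : ℕ) : D.K (t + k) s = D.K t s + k := by
  induction k with
  | zero => simp
  | succ k ih => push_cast; rw [← add_assoc, K_add_one _ _ hs, ih]; ring

lemma half_abs : |(1/2:ℝ)| ≤ 1/2 := by norm_num
lemma neghalf_abs : |-(1/2:ℝ)| ≤ 1/2 := by norm_num

lemma K_surj (x : ℝ) : ∃ p : ℝ × ℝ, |p.2| ≤ 1/2 ∧ D.K p.1 p.2 = x := by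
  set S : Set ℝ := {t | D.K t (-(1/2)) ≤ x} with hS
  have mono : ∀ t t' s s', t < t' → |s| ≤ 1/2 → |s'| ≤ 1/2 → D.K t s ≤ D.K t' s' := by
    intro t t' s s' h hs hs'
    exact D.K_mono hs hs' h.le (fun n => E_lt (by linarith) hs hs')
  have hne : S.Nonempty := by
    obtain ⟨k, hk⟩ := exists_nat_ge (D.K 0 (-(1/2)) - x)
    refine ⟨0 - k, ?_⟩
    have := D.K_add_int (0 - k) neghalf_abs k
    rw [sub_add_cancel] at this
    simp only [hS, mem_ofPred_eq]
    linarith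
  have hbd : BddAbove S := by
    obtain ⟨k, hk⟩ := exists_nat_gt (x - D.K 0 (-(1/2)))
    refine ⟨0 + k, fun t ht => ?_⟩
    by_contra hlt
    push Not at hlt
    have h1 := mono _ _ _ _ hlt neghalf_abs neghalf_abs
    rw [D.K_add_int 0 neghalf_abs] at h1
    simp only [hS, mem_ofPred_eq] at ht
    linarith
  set t0 := sSup S with ht0
  have hlub : IsLUB S t0 := isLUB_csSup hne hbd
  have low : D.K t0 (-(1/2)) ≤ x := by
    have hT : Tendsto (fun t => D.K t (-(1/2))) (𝓝[≤] t0) (𝓝 (D.K t0 (-(1/2)))) := by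
      refine D.K_tendsto (s := fun _ => -(1/2)) (Eventually.of_forall fun _ => neghalf_abs)
        (t := fun t => t) (tendsto_id.mono_left nhdsWithin_le_nhds) (fun n => ?_)
      refine Tendsto.congr' (f₁ := fun _ => sig n t0 (-(1/2))) ?_ tendsto_const_nhds
      have hm : Tendsto (fun t => t - n * rho) (𝓝[≤] t0) (𝓝[≤] (t0 - n * rho)) := by
        refine tendsto_nhdsWithin_iff.2 ⟨?_, ?_⟩
        · exact ((continuous_id.sub continuous_const).tendsto t0).mono_left nhdsWithin_le_nhds
        · filter_upwards [self_mem_nhdsWithin] with t ht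
          simp only [mem_Iic] at ht ⊢
          linarith
      filter_upwards [hm.eventually (E_bot_left (t0 - n * rho))] with t ht
      exact ht.symm
    exact le_of_tendsto_of_frequently hT (hlub.frequently_mem hne)
  have high : x ≤ D.K t0 (1/2) := by
    have hT : Tendsto (fun t => D.K t (1/2)) (𝓝[>] t0) (𝓝 (D.K t0 (1/2))) := by
      refine D.K_tendsto (s := fun _ => 1/2) (Eventually.of_forall fun _ => half_abs)
        (t := fun t => t) (tendsto_id.mono_left nhdsWithin_le_nhds) (fun n => ?_)
      refine Tendsto.congr' (f₁ := fun _ => sig n t0 (1/2)) ?_ tendsto_const_nhds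
      have hm : Tendsto (fun t => t - n * rho) (𝓝[>] t0) (𝓝[>] (t0 - n * rho)) := by
        refine tendsto_nhdsWithin_iff.2 ⟨?_, ?_⟩
        · exact ((continuous_id.sub continuous_const).tendsto t0).mono_left nhdsWithin_le_nhds
        · filter_upwards [self_mem_nhdsWithin] with t ht
          simp only [mem_Ioi] at ht ⊢
          linarith
      filter_upwards [hm.eventually (E_top_right (t0 - n * rho))] with t ht
      exact ht.symm
    refine ge_of_tendsto hT ?_
    filter_upwards [self_mem_nhdsWithin] with t ht
    have h1 : t ∉ S := fun h => absurd (hlub.1 h) (not_le.2 ht)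
    simp only [hS, mem_ofPred_eq, not_le] at h1
    exact h1.le.trans (D.K_mono neghalf_abs half_abs le_rfl (fun n => E_mono (by norm_num)))
  have hc : ContinuousOn (fun s => D.K t0 s) (Icc (-(1/2)) (1/2)) := by
    intro s hs
    refine D.K_tendsto (s := fun s => s) (t := fun _ => t0) ?_ tendsto_const_nhds (fun n => ?_)
    · filter_upwards [self_mem_nhdsWithin] with s hs
      exact abs_le.2 hs
    · exact ((E_cont _).tendsto s).mono_left nhdsWithin_le_nhds
  obtain ⟨s, hs, hx⟩ := intermediate_value_Icc (by norm_num) hc ⟨low, high⟩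
  exact ⟨(t0, s), abs_le.2 hs, hx⟩

lemma sig_indep {m n k : ℤ} (hmn : m ≠ n) {t s s' : ℝ} (ht : t - n * rho = k) : sig m t s = sig m t s' := by
  apply E_indep
  intro h
  have h2 : ((n - m : ℤ) : ℝ) * rho = ((⌊t - m * rho⌋ - k : ℤ) : ℝ) := by
    push_cast; linarith
  have h3 : Irrational (((n - m : ℤ) : ℝ) * rho) := rho_irr.intCast_mul (by omega)
  rw [h2] at h3
  exact (Int.not_irrational _) h3

lemma K_local {n k : ℤ} {t s t' s' : ℝ} (hs : |s| ≤ 1/2) (hs' : |s'| ≤ 1/2)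
    (h1 : k - 1/2 < sig n t s) (h2 : sig n t s < k + 1/2)
    (h1' : k - 1/2 < sig n t' s') (h2' : sig n t' s' < k + 1/2) :
    D.K t' s' - D.K t s = D.G n (sig n t' s') - D.G n (sig n t s) := by
  have e1 := E_mid hs h1 h2
  have e2 := E_mid hs' h1' h2'
  have e3 : t' = t := by linarith
  subst e3
  unfold K
  rw [add_sub_add_left_eq_sub, ← (D.term_summable t' hs').tsum_sub (D.term_summable t' hs), tsum_eq_single n]
  intro m hm
  rw [sig_indep (s := s) (s' := s') hm e1, sub_self]

end GData


namespace GData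
variable (D : GData)

/-- semiconjugacy to the rotation -/
noncomputable def P (x : ℝ) : ℝ := (Classical.choose (D.K_surj x)).1
/-- inner coordinate -/
noncomputable def sg (x : ℝ) : ℝ := (Classical.choose (D.K_surj x)).2
/-- gap coordinates -/
noncomputable def tau (n : ℤ) (x : ℝ) : ℝ := sig n (D.P x) (D.sg x)
/-- the Denjoy homeomorphism -/
noncomputable def hh (x : ℝ) : ℝ := D.K (D.P x + rho) (D.sg x)

lemma sg_abs (x : ℝ) : |D.sg x| ≤ 1/2 := (Classical.choose_spec (D.K_surj x)).1
lemma K_P (x : ℝ) : D.K (D.P x) (D.sg x) = x := (Classical.choose_spec (D.K_surj x)).2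

lemma P_K (t : ℝ) {s : ℝ} (hs : |s| ≤ 1/2) : D.P (D.K t s) = t :=
  (D.K_eq (D.sg_abs _) hs (D.K_P (D.K t s))).1

lemma tau_K (n : ℤ) (t : ℝ) {s : ℝ} (hs : |s| ≤ 1/2) : D.tau n (D.K t s) = sig n t s :=
  (D.K_eq (D.sg_abs _) hs (D.K_P (D.K t s))).2 n

lemma K_shift_le_iff {t s t' s' : ℝ} (hs : |s| ≤ 1/2) (hs' : |s'| ≤ 1/2) :
    D.K (t + rho) s ≤ D.K (t' + rho) s' ↔ D.K t s ≤ D.K t' s' := by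
  rw [D.K_le_iff hs hs', D.K_le_iff hs hs']
  constructor
  · rintro ⟨h1, h2⟩
    refine ⟨by linarith, fun n => ?_⟩
    have := h2 (n+1)
    rwa [sig_shift, sig_shift] at this
  · rintro ⟨h1, h2⟩
    refine ⟨by linarith, fun n => ?_⟩
    have := h2 (n-1)
    rwa [← sig_shift, ← sig_shift (n-1), sub_add_cancel] at this

lemma hh_K (t : ℝ) {s : ℝ} (hs : |s| ≤ 1/2) : D.hh (D.K t s) = D.K (t + rho) s := by
  have h := D.K_P (D.K t s)
  unfold hh
  exact le_antisymm ((D.K_shift_le_iff (D.sg_abs _) hs).2 h.le) ((D.K_shift_le_iff hs (D.sg_abs _)).2 h.ge)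

lemma hh_mono : StrictMono D.hh := by
  apply strictMono_of_le_iff_le
  intro x y
  unfold hh
  rw [D.K_shift_le_iff (D.sg_abs _) (D.sg_abs _), D.K_P, D.K_P]

lemma P_hh (x : ℝ) : D.P (D.hh x) = D.P x + rho := D.P_K _ (D.sg_abs _)

lemma tau_hh (n : ℤ) (x : ℝ) : D.tau (n+1) (D.hh x) = D.tau n x := by
  unfold hh
  rw [D.tau_K _ _ (D.sg_abs _), sig_shift]; rfl

lemma hh_neg_hh (x : ℝ) : D.hh (- D.hh x) = - x := by
  have h : - D.hh x = D.K (-D.P x - rho) (- D.sg x) := by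
    unfold hh
    rw [← K_neg]; congr 1; ring
  rw [h, D.hh_K _ (by rw [abs_neg]; exact D.sg_abs x), sub_add_cancel, K_neg, D.K_P]

lemma hh_neg_hh_neg (x : ℝ) : D.hh (- D.hh (-x)) = x := by rw [hh_neg_hh, neg_neg]

lemma hh_surj : Function.Surjective D.hh := fun y => ⟨_, D.hh_neg_hh_neg y⟩

lemma hh_cont : Continuous D.hh := D.hh_mono.monotone.continuous_of_surjective D.hh_surj

lemma hh_inv (x : ℝ) : Function.invFun D.hh x = - D.hh (-x) := by
  have := Function.leftInverse_invFun D.hh_mono.injective (- D.hh (-x))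
  rwa [hh_neg_hh_neg] at this

lemma add_one_K (x : ℝ) : x + 1 = D.K (D.P x + 1) (D.sg x) := by
  rw [D.K_add_one _ (D.sg_abs x), D.K_P]

lemma hh_add_one (x : ℝ) : D.hh (x + 1) = D.hh x + 1 := by
  rw [D.add_one_K, D.hh_K _ (D.sg_abs x), add_right_comm, D.K_add_one _ (D.sg_abs x)]; rfl

lemma P_add_one (x : ℝ) : D.P (x + 1) = D.P x + 1 := by
  rw [D.add_one_K, D.P_K _ (D.sg_abs x)]

lemma le_iff (x x' : ℝ) : x ≤ x' ↔ (D.P x ≤ D.P x' ∧ ∀ n, D.tau n x ≤ D.tau n x') := by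
  have := D.K_le_iff (t := D.P x) (t' := D.P x') (D.sg_abs x) (D.sg_abs x')
  rwa [D.K_P, D.K_P] at this

lemma P_mono : Monotone D.P := fun x x' h => ((D.le_iff x x').1 h).1

lemma tau_mono (n : ℤ) : Monotone (D.tau n) := fun x x' h => ((D.le_iff x x').1 h).2 n

lemma exists_cell (u : ℝ) : ∃ k : ℤ, (k:ℝ) - 1/2 ≤ u ∧ u < k + 1/2 := by
  refine ⟨⌊u + 1/2⌋, ?_, ?_⟩
  · linarith [Int.floor_le (u + 1/2)]
  · linarith [Int.lt_floor_add_one (u + 1/2)]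

lemma tau_surj (n : ℤ) : Function.Surjective (D.tau n) := by
  intro u
  obtain ⟨k, h1, h2⟩ := exists_cell u
  have hs : |u - k| ≤ 1/2 := by rw [abs_le]; constructor <;> linarith
  refine ⟨D.K (n * rho + k) (u - k), ?_⟩
  rw [D.tau_K _ _ hs]
  unfold sig
  rw [add_sub_cancel_left, E_int]; ring

lemma tau_cont (n : ℤ) : Continuous (D.tau n) := (D.tau_mono n).continuous_of_surjective (D.tau_surj n)

lemma tau_summable (x : ℝ) : Summable (fun n => D.G n (D.tau n x)) := D.term_summable _ (D.sg_abs x)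

lemma series (x : ℝ) : x = D.kap * D.P x + ∑' n, D.G n (D.tau n x) := (D.K_P x).symm

lemma lip (n : ℤ) {x x' : ℝ} (h : x ≤ x') : |D.G n (D.tau n x') - D.G n (D.tau n x)| ≤ x' - x := by
  have h0 : ∀ m, 0 ≤ D.G m (D.tau m x') - D.G m (D.tau m x) := fun m =>
    sub_nonneg.2 ((D.G_mono m).monotone (D.tau_mono m h))
  rw [abs_of_nonneg (h0 n)]
  have h1 := ((D.tau_summable x').sub (D.tau_summable x)).le_tsum n (fun m _ => h0 m)
  rw [(D.tau_summable x').tsum_sub (D.tau_summable x)] at h1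
  have h2 := mul_le_mul_of_nonneg_left (D.P_mono h) D.kap_pos.le
  have h3 := D.series x
  have h4 := D.series x'
  linarith

lemma lip' (n : ℤ) (x x' : ℝ) : |D.G n (D.tau n x') - D.G n (D.tau n x)| ≤ |x' - x| := by
  rcases le_total x x' with h | h
  · rw [abs_of_nonneg (sub_nonneg.2 h)]; exact D.lip n h
  · rw [abs_sub_comm, abs_sub_comm x', abs_of_nonneg (sub_nonneg.2 h)]; exact D.lip n h

lemma tau_local {n k : ℤ} {x x' : ℝ}
    (h1 : k - 1/2 < D.tau n x) (h2 : D.tau n x < k + 1/2)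
    (h1' : k - 1/2 < D.tau n x') (h2' : D.tau n x' < k + 1/2) :
    x' - x = D.G n (D.tau n x') - D.G n (D.tau n x) := by
  have := D.K_local (D.sg_abs x) (D.sg_abs x') h1 h2 h1' h2'
  rwa [D.K_P, D.K_P] at this

/-- second difference of the gap functions -/
noncomputable def Phi (n : ℤ) (u : ℝ) : ℝ := D.G (n+1) u + D.G (n-1) u - 2 * D.G n u

lemma phi_deriv (n : ℤ) (x : ℝ) :
    HasDerivAt (fun x => D.Phi n (D.tau n x)) (D.q n (D.tau n x)) x := by
  rw [hasDerivAt_iff_isLittleO, Asymptotics.isLittleO_iff]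
  intro ε hε
  have h1 := ((D.tau_cont n).tendsto x).eventually (D.G_diff n (D.tau n x) ε hε)
  have h2 : ∀ᶠ x' in 𝓝 x, D.q n (D.tau n x) * (D.G n (D.tau n x') - D.G n (D.tau n x))
      = D.q n (D.tau n x) * (x' - x) := by
    obtain ⟨k, hk1, hk2⟩ := exists_cell (D.tau n x)
    rcases hk1.eq_or_lt with h | h
    · have : D.q n (D.tau n x) = 0 := by
        rw [← h]
        have := D.q_half n (k-1)
        rw [← this]; congr 1; push_cast; ring
      simp [this]
    · have := ((D.tau_cont n).tendsto x).eventually (Ioo_mem_nhds h hk2)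
      filter_upwards [this] with x' hx'
      rw [D.tau_local h hk2 hx'.1 hx'.2]
  filter_upwards [h1, h2] with x' h1 h2
  rw [h2] at h1
  rw [Real.norm_eq_abs, Real.norm_eq_abs, smul_eq_mul, mul_comm (x' - x)]
  exact h1.trans (mul_le_mul_of_nonneg_left (D.lip' n x x') hε.le)

lemma hh_series (x : ℝ) : Summable (fun n => D.G (n+1) (D.tau n x)) ∧
    D.hh x = D.kap * (D.P x + rho) + ∑' n, D.G (n+1) (D.tau n x) := by
  have h1 := D.series (D.hh x)
  have h2 := D.tau_summable (D.hh x)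
  rw [← (Equiv.addRight (1:ℤ)).summable_iff] at h2
  rw [← (Equiv.addRight (1:ℤ)).tsum_eq, P_hh] at h1
  simp only [Function.comp_def, Equiv.coe_addRight, tau_hh] at h1 h2
  exact ⟨h2, h1⟩

lemma hi_series (x : ℝ) : Summable (fun n => D.G (n-1) (D.tau n x)) ∧
    - D.hh (-x) = D.kap * (D.P x - rho) + ∑' n, D.G (n-1) (D.tau n x) := by
  have hx := D.hh_neg_hh_neg x
  set y := - D.hh (-x) with hy
  have h1 := D.series y
  have h2 := D.tau_summable y
  have e1 : D.P x = D.P y + rho := by rw [← P_hh, hx]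
  have e2 : ∀ n, D.tau (n - 1) y = D.tau n x := by
    intro n
    have := D.tau_hh (n-1) y
    rw [hx, sub_add_cancel] at this
    exact this.symm
  rw [← (Equiv.subRight (1:ℤ)).summable_iff] at h2
  rw [← (Equiv.subRight (1:ℤ)).tsum_eq] at h1
  simp only [Function.comp_def, Equiv.subRight_apply, e2] at h1 h2
  refine ⟨h2, ?_⟩
  rw [e1, add_sub_cancel_right]
  exact h1

/-- the generating perturbation -/
noncomputable def phi (x : ℝ) : ℝ := D.hh x - D.hh (-x) - 2 * x

lemma phi_series (x : ℝ) : Summable (fun n => D.Phi n (D.tau n x)) ∧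
    D.phi x = ∑' n, D.Phi n (D.tau n x) := by
  obtain ⟨a1, a2⟩ := D.hh_series x
  obtain ⟨b1, b2⟩ := D.hi_series x
  have c1 := D.tau_summable x
  have c2 := D.series x
  have c3 := c1.mul_left 2
  refine ⟨(a1.add b1).sub c3, ?_⟩
  unfold Phi
  rw [(a1.add b1).tsum_sub c3, a1.tsum_add b1, tsum_mul_left]
  unfold phi
  linarith

lemma phi_contDiff : ContDiff ℝ 1 D.phi := by
  have he : D.phi = fun x => ∑' n, D.Phi n (D.tau n x) := funext fun x => (D.phi_series x).2
  have hd : ∀ x, HasDerivAt D.phi (∑' n, D.q n (D.tau n x)) x := by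
    intro x
    rw [he]
    exact hasDerivAt_tsum D.B_sum (fun n y => D.phi_deriv n y) (fun n y => D.q_le n _) (D.phi_series 0).1 x
  rw [contDiff_one_iff_deriv]
  refine ⟨fun x => (hd x).differentiableAt, ?_⟩
  rw [show deriv D.phi = fun x => ∑' n, D.q n (D.tau n x) from funext fun x => (hd x).deriv]
  exact continuous_tsum (fun n => (D.q_cont n).comp (D.tau_cont n)) D.B_sum (fun n x => D.q_le n _)

lemma phi_per : Function.Periodic D.phi 1 := by
  intro x
  unfold phi
  have := D.hh_add_one (-(x+1))
  rw [show -(x+1) + 1 = -x by ring] at this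
  rw [hh_add_one]
  linarith

lemma phi_mean : ∫ t in (0:ℝ)..1, D.phi t = 0 := by
  have h1 : ∫ t in (0:ℝ)..1, D.phi (1 - t) = ∫ t in (0:ℝ)..1, D.phi t := by
    rw [intervalIntegral.integral_comp_sub_left]; simp
  have h2 : ∀ t, D.phi (1 - t) = - D.phi t := by
    intro t
    rw [show 1 - t = -t + 1 by ring, D.phi_per]
    unfold phi
    rw [neg_neg]; ring
  simp only [h2, intervalIntegral.integral_neg] at h1
  linarith

lemma P_bound : ∃ M, ∀ x, |D.P x - x| ≤ M := by
  let f : CircleDeg1Lift := ⟨⟨D.P, D.P_mono⟩, D.P_add_one⟩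
  refine ⟨|D.P 0| + 1, fun x => ?_⟩
  have h := f.map_fract_sub_fract_eq x
  change D.P (Int.fract x) - Int.fract x = D.P x - x at h
  rw [← h]
  have h1 := D.P_mono (Int.fract_nonneg x)
  have h2 := D.P_mono (Int.fract_lt_one x).le
  have h3 := D.P_add_one 0
  rw [zero_add] at h3
  have := Int.fract_nonneg x
  have := Int.fract_lt_one x
  rw [abs_le]
  constructor <;> linarith [neg_abs_le (D.P 0), le_abs_self (D.P 0)]

lemma P_iter (n : ℕ) (x : ℝ) : D.P (D.hh^[n] x) = D.P x + n * rho := by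
  induction n with
  | zero => simp
  | succ n ih => rw [Function.iterate_succ_apply', P_hh, ih]; push_cast; ring

lemma tau_iter (n : ℕ) (x : ℝ) : D.tau n (D.hh^[n] x) = D.tau 0 x := by
  induction n with
  | zero => simp
  | succ n ih => rw [Function.iterate_succ_apply']; push_cast; rw [tau_hh, ih]

lemma rot (t : ℝ) : Tendsto (fun n : ℕ => (D.hh^[n] t - t) / n) atTop (𝓝 rho) := by
  obtain ⟨M, hM⟩ := D.P_bound
  rw [tendsto_iff_norm_sub_tendsto_zero]
  have hz : Tendsto (fun n : ℕ => (2 * M) / (n:ℝ)) atTop (𝓝 0) := tendsto_const_div_atTop_nhds_zero_nat _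
  refine squeeze_zero' (Eventually.of_forall fun _ => norm_nonneg _) ?_ hz
  filter_upwards [eventually_gt_atTop 0] with n hn
  have hn' : (0:ℝ) < n := by exact_mod_cast hn
  have e : (D.hh^[n] t - t) / n - rho = ((D.P t - t) - (D.P (D.hh^[n] t) - D.hh^[n] t)) / n := by
    rw [P_iter]; field_simp; ring
  rw [e, Real.norm_eq_abs, abs_div, abs_of_pos hn']
  gcongr
  refine (abs_sub _ _).trans ?_
  linarith [hM t, hM (D.hh^[n] t)]

lemma no_per (t : ℝ) (n : ℕ) (hn : 0 < n) (m : ℤ) : D.hh^[n] t ≠ t + m := by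
  intro h
  have h1 := D.P_iter n t
  let f : CircleDeg1Lift := ⟨⟨D.P, D.P_mono⟩, D.P_add_one⟩
  have h2 : D.P (t + m) = D.P t + m := f.map_add_int t m
  rw [h, h2] at h1
  have h3 : Irrational ((n:ℝ) * rho) := rho_irr.natCast_mul (by omega)
  have h4 : (n:ℝ) * rho = m := by linarith
  rw [h4] at h3
  exact Int.not_irrational _ h3

lemma not_conj : ¬ ∃ k : ℝ → ℝ, StrictMono k ∧ Continuous k ∧ Function.Bijective k ∧
    (∀ t : ℝ, k (t + 1) = k t + 1) ∧ ∀ t : ℝ, k (D.hh t) = k t + rho := by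
  rintro ⟨k, km, kc, -, k1, kh⟩
  have kit : ∀ (n : ℕ) t, k (D.hh^[n] t) = k t + n * rho := by
    intro n t
    induction n with
    | zero => simp
    | succ n ih => rw [Function.iterate_succ_apply', kh, ih]; push_cast; ring
  have q4 : |(1/4:ℝ)| ≤ 1/2 := by norm_num [abs_of_pos]
  have q0 : |(0:ℝ)| ≤ 1/2 := by norm_num
  set x := D.K 0 0 with hx
  set x' := D.K 0 (1/4) with hx'
  have tx : D.tau 0 x = 0 := by
    rw [hx, D.tau_K _ _ q0]; unfold sig
    have := E_int 0 0
    simpa using this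
  have tx' : D.tau 0 x' = 1/4 := by
    rw [hx', D.tau_K _ _ q4]; unfold sig
    have := E_int 0 (1/4)
    simpa using this
  have hlt : x < x' := by
    have := D.tau_local (n := 0) (k := 0) (x := x) (x' := x') (by rw [tx]; norm_num) (by rw [tx]; norm_num)
      (by rw [tx']; norm_num) (by rw [tx']; norm_num)
    rw [tx, tx'] at this
    have h2 := D.G_mono 0 (show (0:ℝ) < 1/4 by norm_num)
    linarith
  have hdist : ∀ n : ℕ, |D.hh^[n] x' - D.hh^[n] x| ≤ D.l n := by
    intro n
    have e1 := D.tau_iter n x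
    have e2 := D.tau_iter n x'
    rw [tx] at e1
    rw [tx'] at e2
    have := D.tau_local (n := n) (k := 0) (x := D.hh^[n] x) (x' := D.hh^[n] x') (by rw [e1]; norm_num) (by rw [e1]; norm_num)
      (by rw [e2]; norm_num) (by rw [e2]; norm_num)
    rw [this, e1, e2]
    have h1 := D.G_mono n (show (0:ℝ) < 1/4 by norm_num)
    have h2 := D.G_mono n (show (1/4:ℝ) < 0 + 1 by norm_num)
    rw [D.G_add_one] at h2
    rw [abs_of_pos (by linarith)]
    linarith
  have hl : Tendsto (fun n : ℕ => D.l n) atTop (𝓝 0) := by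
    have : Summable (fun n : ℕ => D.l n) := D.l_summable.comp_injective Nat.cast_injective
    exact this.tendsto_atTop_zero
  have hper : Function.Periodic (fun t => k t - t) 1 := by
    intro t; simp only [k1]; ring
  have hku : UniformContinuous k := by
    have h1 : UniformContinuous (fun t => k t - t) := by
      haveI : Fact ((0:ℝ) < 1) := ⟨one_pos⟩
      have hl : Continuous (hper.lift : AddCircle (1:ℝ) → ℝ) :=
        continuous_coinduced_dom.2 (kc.sub continuous_id)
      have hq : UniformContinuous (QuotientAddGroup.mk' (AddSubgroup.zmultiples (1:ℝ))) :=
        uniformContinuous_addMonoidHom_of_continuous (AddCircle.continuous_mk' 1)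
      exact (CompactSpace.uniformContinuous_of_continuous hl).comp hq
    have := h1.add uniformContinuous_id
    simpa using this
  obtain ⟨δ, hδ, hk⟩ := Metric.uniformContinuous_iff.1 hku (k x' - k x) (sub_pos.2 (km hlt))
  obtain ⟨n, hn⟩ := (hl.eventually_lt_const hδ).exists
  have := hk (a := D.hh^[n] x') (b := D.hh^[n] x) (by rw [Real.dist_eq]; exact (hdist n).trans_lt hn)
  rw [Real.dist_eq, kit, kit, add_sub_add_right_eq_sub, abs_of_pos (sub_pos.2 (km hlt))] at this
  exact lt_irrefl _ this

lemma tau_x0 : D.tau 0 (D.K 0 0) = 0 := by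
  rw [D.tau_K _ _ (by norm_num)]; unfold sig
  have := E_int 0 0
  simpa using this

lemma side_deriv (S : Set ℝ) (T : Set ℝ) (r : ℝ)
    (hST : ∀ x ∈ S, -(1/2) < D.tau 0 x → D.tau 0 x < 1/2 → D.tau 0 x ∈ T)
    (hG : ∀ ε > 0, ∀ᶠ s in 𝓝[T] (0:ℝ), |D.G 1 s - r * D.G 0 s| ≤ ε * |D.G 0 s|) :
    HasDerivWithinAt (fun t => D.hh t - t) (r - 1) S (D.K 0 0) := by
  have h0 := D.tau_x0
  set x0 := D.K 0 0 with hx0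
  rw [hasDerivWithinAt_iff_isLittleO, Asymptotics.isLittleO_iff]
  intro ε hε
  have hc : Tendsto (D.tau 0) (𝓝[S] x0) (𝓝 0) := by
    have := ((D.tau_cont 0).tendsto x0).mono_left (nhdsWithin_le_nhds (s := S))
    rwa [h0] at this
  have hI : ∀ᶠ x in 𝓝[S] x0, D.tau 0 x ∈ Ioo (-(1/2):ℝ) (1/2) :=
    hc.eventually (Ioo_mem_nhds (by norm_num) (by norm_num))
  have hc' : Tendsto (D.tau 0) (𝓝[S] x0) (𝓝[T] 0) := by
    refine tendsto_nhdsWithin_iff.2 ⟨hc, ?_⟩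
    filter_upwards [hI, self_mem_nhdsWithin] with x hx hS
    exact hST x hS hx.1 hx.2
  filter_upwards [hI, hc'.eventually (hG ε hε)] with x hx h1
  have e1 : x - x0 = D.G 0 (D.tau 0 x) := by
    have := D.tau_local (n := 0) (k := 0) (x := x0) (x' := x) (by rw [h0]; norm_num) (by rw [h0]; norm_num)
      (by push_cast; linarith [hx.1]) (by push_cast; linarith [hx.2])
    rw [this, h0, D.G_zero, sub_zero]
  have t0 : D.tau 1 (D.hh x0) = 0 := by
    have := D.tau_hh 0 x0
    rwa [zero_add, h0] at this
  have t1 : D.tau 1 (D.hh x) = D.tau 0 x := by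
    have := D.tau_hh 0 x
    rwa [zero_add] at this
  have e2 : D.hh x - D.hh x0 = D.G 1 (D.tau 0 x) := by
    have := D.tau_local (n := 1) (k := 0) (x := D.hh x0) (x' := D.hh x) (by rw [t0]; norm_num) (by rw [t0]; norm_num)
      (by rw [t1]; push_cast; linarith [hx.1]) (by rw [t1]; push_cast; linarith [hx.2])
    rw [this, t0, t1, D.G_zero, sub_zero]
  rw [Real.norm_eq_abs, Real.norm_eq_abs, smul_eq_mul]
  rw [← e1, ← e2] at h1
  convert h1 using 2
  ring

lemma G0_pos_iff {x : ℝ} (h1 : -(1/2) < D.tau 0 x) (h2 : D.tau 0 x < 1/2) :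
    x - D.K 0 0 = D.G 0 (D.tau 0 x) := by
  have h0 := D.tau_x0
  have := D.tau_local (n := 0) (k := 0) (x := D.K 0 0) (x' := x) (by rw [h0]; norm_num) (by rw [h0]; norm_num)
      (by push_cast; linarith) (by push_cast; linarith)
  rw [this, h0, D.G_zero, sub_zero]

lemma right_deriv : HasDerivWithinAt (fun t => D.hh t - t) (2 - 1) (Ioi (D.K 0 0)) (D.K 0 0) := by
  refine D.side_deriv _ (Ioi 0) 2 (fun x hx h1 h2 => ?_) D.G_right
  have := D.G0_pos_iff h1 h2
  rw [mem_Ioi] at hx ⊢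
  rw [← (D.G_mono 0).lt_iff_lt, D.G_zero]
  linarith

lemma left_deriv : HasDerivWithinAt (fun t => D.hh t - t) (1 - 1) (Iio (D.K 0 0)) (D.K 0 0) := by
  refine D.side_deriv _ (Iio 0) 1 (fun x hx h1 h2 => ?_) D.G_left
  have := D.G0_pos_iff h1 h2
  rw [mem_Iio] at hx ⊢
  rw [← (D.G_mono 0).lt_iff_lt, D.G_zero]
  linarith

end GData

/-- There exist a `C¹`, 1-periodic function `φ : ℝ → ℝ` with zero mean on `[0,1]`, and a
strictly increasing homeomorphism `h : ℝ → ℝ` commuting with `x ↦ x + 1` (the lift of an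
orientation-preserving circle homeomorphism) such that `h + h⁻¹ = 2·id + φ`, the rotation
number `ρ` of `h` is irrational (so `h` has no periodic points), `h` is not conjugate to the
rotation by `ρ` (a Denjoy counter-example), and `ψ = h − id` has distinct finite left and
right derivatives at some point `x₀`. -/
theorem non_differentiable_invariant_curve_exists :
    ∃ (φ h : ℝ → ℝ) (ρ x₀ dL dR : ℝ),
      ContDiff ℝ 1 φ ∧ Function.Periodic φ 1 ∧ (∫ t in (0:ℝ)..1, φ t) = 0 ∧
      StrictMono h ∧ Continuous h ∧ Function.Bijective h ∧
      (∀ t : ℝ, h (t + 1) = h t + 1) ∧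
      (∀ t : ℝ, h t + Function.invFun h t = 2 * t + φ t) ∧
      Irrational ρ ∧
      (∀ t : ℝ, Tendsto (fun n : ℕ => (h^[n] t - t) / n) atTop (𝓝 ρ)) ∧
      (∀ (t : ℝ) (n : ℕ), 0 < n → ∀ m : ℤ, h^[n] t ≠ t + m) ∧
      (¬ ∃ k : ℝ → ℝ, StrictMono k ∧ Continuous k ∧ Function.Bijective k ∧
          (∀ t : ℝ, k (t + 1) = k t + 1) ∧ ∀ t : ℝ, k (h t) = k t + ρ) ∧
      dL ≠ dR ∧
      HasDerivWithinAt (fun t => h t - t) dL (Set.Iio x₀) x₀ ∧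
      HasDerivWithinAt (fun t => h t - t) dR (Set.Ioi x₀) x₀ := by
  obtain ⟨D⟩ := exists_GData
  refine ⟨D.phi, D.hh, rho, D.K 0 0, 1 - 1, 2 - 1, D.phi_contDiff, D.phi_per, D.phi_mean, D.hh_mono, D.hh_cont,
    ⟨D.hh_mono.injective, D.hh_surj⟩, D.hh_add_one, fun t => ?_, rho_irr, D.rot, D.no_per, D.not_conj, by norm_num,
    D.left_deriv, D.right_deriv⟩
  rw [D.hh_inv]; unfold GData.phi; ring
end

section
/- Let φ, ψ : ℝ → ℝ be continuous and 1-periodic. Let F : ℝ² → ℝ² be defined by F(θ, r) = (θ + r, r + φ(θ + r)) and let Γ = {(θ, ψ(θ)) : θ ∈ ℝ} be the graph of ψ. Then F(Γ) = Γ if and only if the map g̃ = id_ℝ + ψ is a (strictly increasing) homeomorphism of ℝ (hence a lift of an orientation-preserving circle homeomorphism) and id_ℝ + φ/2 = (g̃ + g̃⁻¹)/2, i.e. φ(x) = g̃(x) + g̃⁻¹(x) − 2x for all x ∈ ℝ. -/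
open Set

/-- For continuous 1-periodic `φ, ψ : ℝ → ℝ`, the graph `Γ` of `ψ` is invariant under
`F(θ, r) = (θ + r, r + φ(θ + r))` if and only if `g = id + ψ` is a strictly increasing
homeomorphism of `ℝ` (the lift of an orientation-preserving circle homeomorphism) and
`φ = g + g⁻¹ − 2·id`. -/
theorem graph_invariant_iff (φ ψ : ℝ → ℝ)
    (hφc : Continuous φ) (hψc : Continuous ψ)
    (hφp : Function.Periodic φ 1) (hψp : Function.Periodic ψ 1) :
    (fun p : ℝ × ℝ => (p.1 + p.2, p.2 + φ (p.1 + p.2))) ''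
        (Set.range fun θ : ℝ => (θ, ψ θ)) = (Set.range fun θ : ℝ => (θ, ψ θ)) ↔
      (StrictMono (fun t : ℝ => t + ψ t) ∧
        Function.Bijective (fun t : ℝ => t + ψ t) ∧
        ∀ t : ℝ, φ t = (t + ψ t) + Function.invFun (fun s : ℝ => s + ψ s) t - 2 * t) := by
  have hg1 : (1:ℝ) + ψ 1 = (0 + ψ 0) + 1 := by
    have := hψp 0
    rw [zero_add] at this
    rw [this]; ring
  constructor
  · intro h
    have h1 : ∀ θ, ψ (θ + ψ θ) = ψ θ + φ (θ + ψ θ) := by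
      intro θ
      have hm : ((θ + ψ θ, ψ θ + φ (θ + ψ θ)) : ℝ × ℝ) ∈ Set.range fun θ : ℝ => (θ, ψ θ) := by
        rw [← h]
        exact ⟨(θ, ψ θ), ⟨θ, rfl⟩, rfl⟩
      obtain ⟨s, hs⟩ := hm
      simp only [Prod.mk.injEq] at hs
      rw [← hs.2, ← hs.1]
    have hsurj : Function.Surjective (fun t : ℝ => t + ψ t) := by
      intro t
      have hm : ((t, ψ t) : ℝ × ℝ) ∈ Set.range fun θ : ℝ => (θ, ψ θ) := ⟨t, rfl⟩
      rw [← h] at hm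
      obtain ⟨_, ⟨θ, rfl⟩, hs⟩ := hm
      simp only [Prod.mk.injEq] at hs
      exact ⟨θ, hs.1⟩
    have hinj : Function.Injective (fun t : ℝ => t + ψ t) := by
      intro a b hab
      simp only at hab
      have ha := h1 a
      have hb := h1 b
      rw [hab] at ha
      linarith
    refine ⟨?_, ⟨hinj, hsurj⟩, ?_⟩
    · have hc : Continuous (fun t : ℝ => t + ψ t) := by fun_prop
      rcases hc.strictMono_of_inj hinj with hm | hm
      · exact hm
      · have := hm (zero_lt_one : (0:ℝ) < 1)
        simp only at this
        linarith
    · intro t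
      have ht := Function.rightInverse_invFun hsurj t
      have h2 := h1 (Function.invFun (fun s : ℝ => s + ψ s) t)
      rw [ht] at h2
      linarith
  · rintro ⟨-, ⟨hinj, hsurj⟩, hφ⟩
    have h1 : ∀ θ, ψ (θ + ψ θ) = ψ θ + φ (θ + ψ θ) := by
      intro θ
      have ht := Function.leftInverse_invFun hinj θ
      have h2 := hφ (θ + ψ θ)
      rw [ht] at h2
      linarith
    ext p
    constructor
    · rintro ⟨_, ⟨θ, rfl⟩, rfl⟩
      exact ⟨θ + ψ θ, by simp [h1]⟩
    · rintro ⟨t, rfl⟩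
      obtain ⟨θ, hθ⟩ := hsurj t
      simp only at hθ
      subst hθ
      exact ⟨(θ, ψ θ), ⟨θ, rfl⟩, by simp [h1]⟩
end

section
/- Let (α_n)_{n≥0} be a sequence of positive real numbers with lim_{n→∞} α_n = 1, and for n ≥ 1 set m_n = α_n + 1/α_{n−1}. Let (β_n)_{n≥0} be a real sequence with β_0 > α_0 satisfying β_n = m_n − 1/β_{n−1} for all n ≥ 1. Then β_n > α_n > 0 for every n ≥ 0, and lim_{n→∞} β_n = 1. -/
open Filter Topology

/-- Lemma 1 of the paper. If `α n > 0`, `α n → 1`, `m n = α n + 1/α (n-1)` for `n ≥ 1`,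
`β 0 > α 0` and `β n = m n − 1/β (n-1)` for `n ≥ 1`, then `β n > α n > 0` for all `n` and
`β n → 1`. -/
theorem forward_orbit_derivatives_tendsto_one (α β m : ℕ → ℝ)
    (hαpos : ∀ n, 0 < α n)
    (hαlim : Tendsto α atTop (𝓝 1))
    (hm : ∀ n, 1 ≤ n → m n = α n + 1 / α (n - 1))
    (hβ0 : α 0 < β 0)
    (hβ : ∀ n, 1 ≤ n → β n = m n - 1 / β (n - 1)) :
    (∀ n, α n < β n) ∧ Tendsto β atTop (𝓝 1) := by
  have hrec : ∀ n, β (n + 1) = α (n + 1) + 1 / α n - 1 / β n := by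
    intro n
    have h1 := hβ (n + 1) (by omega)
    have h2 := hm (n + 1) (by omega)
    simp only [Nat.add_sub_cancel] at h1 h2
    rw [h1, h2]
  have hlt : ∀ n, α n < β n := by
    intro n
    induction n with
    | zero => exact hβ0
    | succ k ih =>
      have := one_div_lt_one_div_of_lt (hαpos k) ih
      rw [hrec]; linarith
  refine ⟨hlt, ?_⟩
  obtain ⟨d, hd⟩ : ∃ d : ℕ → ℝ, ∀ n, d n = β n - α n := ⟨_, fun _ => rfl⟩
  have hdpos : ∀ n, 0 < d n := fun n => by rw [hd]; linarith [hlt n]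
  have hdrec : ∀ n, d (n + 1) * (α n * (α n + d n)) = d n := by
    intro n
    have h1 := (hαpos n).ne'
    have h2 : β n ≠ 0 := ((hαpos n).trans (hlt n)).ne'
    rw [hd, hd, hrec]
    field_simp
    ring
  have hdlim : Tendsto d atTop (𝓝 0) := by
    rw [Metric.tendsto_atTop]
    intro e he
    obtain ⟨ε, hε, hεe⟩ : ∃ ε, 0 < ε ∧ ε < e := ⟨e / 2, by linarith, by linarith⟩
    have hK : Tendsto (fun n => α n * (α n + ε)) atTop (𝓝 (1 * (1 + ε))) :=
      hαlim.mul (hαlim.add_const ε)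
    obtain ⟨N, hN⟩ := eventually_atTop.1
      (hK.eventually_const_lt (show 1 + ε / 2 < 1 * (1 + ε) by linarith))
    have hK1 : 1 < 1 + ε / 2 := by linarith
    generalize 1 + ε / 2 = K at hN hK1
    have hK0 : 0 < K := by linarith
    have hbig : ∀ n, N ≤ n → ε ≤ d n → d (n + 1) * K ≤ d n := by
      intro n hn h
      rw [← hdrec n]
      have := hN n hn
      have h3 : α n * (α n + ε) ≤ α n * (α n + d n) :=
        mul_le_mul_of_nonneg_left (by linarith) (hαpos n).le
      exact mul_le_mul_of_nonneg_left (by linarith) (hdpos _).le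
    have hsmall : ∀ n, N ≤ n → d n ≤ ε → d (n + 1) ≤ ε := by
      intro n hn h
      have h1 := hN n hn
      have h2 := hdrec n
      have ha := hαpos n
      have hp := hdpos n
      by_contra! hc
      have h4 : ε * (α n * (α n + d n)) < d n := by
        refine lt_of_lt_of_eq ?_ h2
        exact mul_lt_mul_of_pos_right hc (by positivity)
      have h5 : d n * (α n * (α n + ε)) ≤ ε * (α n * (α n + d n)) := by
        have : d n * (α n * α n) ≤ ε * (α n * α n) :=
          mul_le_mul_of_nonneg_right h (by positivity)
        linarith
      have h6 : d n * 1 ≤ d n * (α n * (α n + ε)) :=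
        mul_le_mul_of_nonneg_left (by linarith) hp.le
      linarith
    have hmain : ∀ k, d (N + k) ≤ ε ∨ d (N + k) * K ^ k ≤ d N := by
      intro k
      induction k with
      | zero => right; simp
      | succ k ih =>
        rcases le_total (d (N + k)) ε with h | h
        · left; exact hsmall (N + k) (by omega) h
        · have h1 := hbig (N + k) (by omega) h
          rcases ih with h' | h'
          · left; exact hsmall (N + k) (by omega) h'
          · right
            have := mul_le_mul_of_nonneg_right h1 (pow_pos hK0 k).le
            rw [← add_assoc, pow_succ]
            linarith
    obtain ⟨k, hk⟩ := pow_unbounded_of_one_lt (d N / ε) hK1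
    have hstart : d (N + k) ≤ ε := by
      rcases hmain k with h | h
      · exact h
      · rw [div_lt_iff₀ hε] at hk
        have hp : 0 < K ^ k := pow_pos hK0 k
        by_contra! hc
        have := mul_lt_mul_of_pos_right hc hp
        linarith
    refine ⟨N + k, fun n hn => ?_⟩
    have : d n ≤ ε := by
      induction n, hn using Nat.le_induction with
      | base => exact hstart
      | succ n hn ih => exact hsmall n (by omega) ih
    rw [Real.dist_eq, sub_zero, abs_of_pos (hdpos n)]
    linarith
  have := hαlim.add hdlim
  rw [add_zero] at this
  refine this.congr fun n => ?_
  rw [hd]; ring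
end

section
/- Let (α_n)_{n≥0} be a sequence of positive real numbers with lim_{n→∞} α_n = 1, and for n ≥ 0 set μ_n = α_n + 1/α_{n+1}. Let (β_n)_{n≥0} be a real sequence with 0 < β_0 < α_0 satisfying β_{n+1} = 1/(μ_n − β_n) for all n ≥ 0. Then 0 < β_n < α_n for every n ≥ 0 (in particular μ_n − β_n > 0, so the recursion is well defined), and lim_{n→∞} β_n = 1. -/
open Filter Topology

/-- Lemma 2 of the paper (backward-orbit analogue of Lemma 1). If `α n > 0`, `α n → 1`,
`μ n = α n + 1/α (n+1)`, `0 < β 0 < α 0` and `β (n+1) = 1/(μ n − β n)`, then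
`0 < β n < α n` for all `n` (in particular `μ n − β n > 0`) and `β n → 1`. -/
theorem backward_orbit_derivatives_tendsto_one (α β μ : ℕ → ℝ)
    (hαpos : ∀ n, 0 < α n)
    (hαlim : Tendsto α atTop (𝓝 1))
    (hμ : ∀ n, μ n = α n + 1 / α (n + 1))
    (hβ0 : 0 < β 0 ∧ β 0 < α 0)
    (hβ : ∀ n, β (n + 1) = 1 / (μ n - β n)) :
    (∀ n, 0 < β n ∧ β n < α n) ∧ (∀ n, 0 < μ n - β n) ∧ Tendsto β atTop (𝓝 1) := by
  have key : ∀ n, 0 < β n ∧ β n < α n := by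
    intro n
    induction n with
    | zero => exact hβ0
    | succ n ih =>
      have ha := hαpos (n + 1)
      have h1 : 0 < 1 / α (n + 1) := by positivity
      have h2 : 1 / α (n + 1) < μ n - β n := by rw [hμ]; linarith [ih.2]
      rw [hβ]
      refine ⟨by have := h1.trans h2; positivity, ?_⟩
      have := one_div_lt_one_div_of_lt h1 h2
      rwa [one_div_one_div] at this
  have hpos : ∀ n, 0 < μ n - β n := by
    intro n
    have h1 : 0 < 1 / α (n + 1) := one_div_pos.2 (hαpos _)
    rw [hμ]; linarith [(key n).2]
  refine ⟨key, hpos, ?_⟩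
  have hu : ∀ n, 0 < (α n - β n)⁻¹ := fun n => inv_pos.2 (by linarith [(key n).2])
  have hrec : ∀ n, (α (n+1) - β (n+1))⁻¹
      = ((α (n+1))⁻¹)^2 * (α n - β n)⁻¹ + (α (n+1))⁻¹ := by
    intro n
    have ha := hαpos (n + 1)
    have hd : 0 < α n - β n := by linarith [(key n).2]
    have hx : 0 < 1 + α (n+1) * (α n - β n) := by positivity
    have e : α (n+1) - β (n+1)
        = (α (n+1))^2 * (α n - β n) / (1 + α (n+1) * (α n - β n)) := by
      have : μ n - β n = (1 + α (n+1) * (α n - β n)) / α (n+1) := by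
        rw [hμ]; field_simp; ring
      rw [hβ, this, one_div_div]
      rw [eq_div_iff hx.ne', sub_mul, div_mul_cancel₀ _ hx.ne']
      ring
    rw [e, inv_div]
    generalize α n - β n = d at *
    field_simp
  have hinv : Tendsto (fun n => (α (n+1))⁻¹) atTop (𝓝 1) := by
    have := (hαlim.comp (tendsto_add_atTop_nat 1)).inv₀ one_ne_zero
    simpa using this
  have hinv2 : Tendsto (fun n => ((α (n+1))⁻¹)^2) atTop (𝓝 1) := by
    simpa using hinv.pow 2
  have htop : Tendsto (fun n => (α n - β n)⁻¹) atTop atTop := by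
    rw [tendsto_atTop]
    intro K0
    obtain ⟨K, hK1, hK0⟩ : ∃ K : ℝ, 1 ≤ K ∧ K0 ≤ K :=
      ⟨max 1 K0, le_max_left _ _, le_max_right _ _⟩
    have hε : 0 < 1 / (4 * K) := by positivity
    have hεK : 1 / (4 * K) * K = 1 / 4 := by field_simp
    have hε1 : 1 / (4 * K) ≤ 1 := by
      rw [div_le_one (by positivity)]; linarith
    obtain ⟨N, hN⟩ := eventually_atTop.1
      ((hinv.eventually (lt_mem_nhds (show (1/2:ℝ) < 1 by norm_num))).and
        (hinv2.eventually (lt_mem_nhds (show 1 - 1 / (4 * K) < 1 by linarith))))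
    have hmin : ∀ k : ℕ, min K ((k:ℝ) / 4) ≤ (α (N + k) - β (N + k))⁻¹ := by
      intro k
      induction k with
      | zero => exact (min_le_right _ _).trans (by simpa using (hu N).le)
      | succ k ih =>
        obtain ⟨h1, h2⟩ := hN (N + k) (by omega)
        have hr := hrec (N + k)
        have h0 := hu (N + k)
        rw [← add_assoc, hr]
        generalize (α (N + k) - β (N + k))⁻¹ = u at *
        generalize 1 / (4 * K) = ε at *
        have h3 := mul_le_mul_of_nonneg_right h2.le h0.le
        push_cast
        rcases le_total K u with h | h
        · refine (min_le_left _ _).trans ?_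
          nlinarith [mul_le_mul_of_nonneg_left h (sub_nonneg.2 hε1)]
        · have h5 := mul_le_mul_of_nonneg_left h hε.le
          rcases min_le_iff.1 ih with h4 | h4
          · refine (min_le_left _ _).trans ?_
            nlinarith
          · refine (min_le_right _ _).trans ?_
            nlinarith
    obtain ⟨M, hM⟩ := exists_nat_ge (4 * K)
    filter_upwards [eventually_ge_atTop (N + M)] with n hn
    obtain ⟨k, rfl⟩ := Nat.exists_eq_add_of_le (show N ≤ n by omega)
    have hk : (M:ℝ) ≤ k := by exact_mod_cast (show M ≤ k by omega)
    refine hK0.trans (le_trans (le_min le_rfl ?_) (hmin k))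
    linarith
  have hδ := htop.inv_tendsto_atTop
  have := hαlim.sub hδ
  simpa using this
end

section
/- Let g be an orientation-preserving C¹ diffeomorphism of the circle 𝕋 = ℝ/ℤ with irrational rotation number whose unique minimal set is a Cantor set K, with g'(θ) = 1 for every θ ∈ K, and such that for every ε > 0 all but finitely many connected components I of 𝕋 ∖ K satisfy sup_{t ∈ I} |g'(t) − 1| < ε. Let x₀ ∈ 𝕋 ∖ K, set x_k = g^k(x₀) for k ∈ ℤ, and let I_k = (a_k, b_k) be the connected component of 𝕋 ∖ K containing x_k. Let (β_k^L)_{k∈ℤ} and (β_k^R)_{k∈ℤ} be positive real numbers with β_k^L → 1 and β_k^R → 1 as |k| → ∞. Then there exists an orientation-preserving homeomorphism h of 𝕋 such that: (i) h = g on K and h(x_k) = g(x_k) = x_{k+1} for all k ∈ ℤ; (ii) the restrictions of h to each half-interval (a_k, x_k] and [x_k, b_k) are C¹; (iii) h has left derivative β_k^L and right derivative β_k^R at each x_k; (iv) h is differentiable at every point of K with derivative 1, and h and h⁻¹ are C¹ at every point of 𝕋 except the points of the orbit (x_k)_{k∈ℤ}. -/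
open Filter Topology Set

lemma aux_profile (u v α β r : ℝ) (huv : u < v) (hα : 0 < α) (hβ : 0 < β) (hr : 0 < r) :
    ∃ p : ℝ → ℝ, Continuous p ∧ p u = α ∧ p v = β ∧ (∫ t in u..v, p t) = r * (v - u) ∧
      ∀ t ∈ Set.Icc u v, 0 < p t ∧ |p t - 1| ≤ 2 * |r - 1| + |α - 1| + |β - 1| := by
  obtain ⟨m, hm⟩ := exists_nat_gt ((α + β) / r)
  have hm' : α + β < m * r := by rwa [div_lt_iff₀ hr] at hm
  have hm0 : (0:ℝ) ≤ m := Nat.cast_nonneg m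
  set c : ℝ := ((m + 4) * r - (α + β)) / (m + 2) with hc
  have hm2 : (0:ℝ) < m + 2 := by linarith
  have hcpos : 0 < c := by
    apply div_pos _ hm2
    nlinarith
  have hvu : 0 < v - u := by linarith
  have hceq : c * (m + 2) = (m + 4) * r - (α + β) := by rw [hc]; field_simp
  set M : ℝ := 2 * |r - 1| + |α - 1| + |β - 1| with hM
  have hcM : |c - 1| ≤ M := by
    have h1 : (c - 1) * (m + 2) = (m + 4) * (r - 1) - (α - 1) - (β - 1) := by
      linear_combination hceq
    have h2 : |c - 1| * (m + 2) ≤ M * (m + 2) := by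
      rw [← abs_of_pos hm2, ← abs_mul, abs_of_pos hm2, h1]
      have e1 := abs_sub ((m + 4) * (r - 1) - (α - 1)) (β - 1)
      have e2 := abs_sub ((m + 4) * (r - 1)) (α - 1)
      have e3 : |(m + 4) * (r - 1)| = (m + 4) * |r - 1| := by
        rw [abs_mul, abs_of_pos (by linarith)]
      have := abs_nonneg (r - 1)
      have := abs_nonneg (α - 1)
      have := abs_nonneg (β - 1)
      rw [hM]
      nlinarith [mul_nonneg hm0 (abs_nonneg (r - 1)), mul_nonneg hm0 (abs_nonneg (α - 1)), mul_nonneg hm0 (abs_nonneg (β - 1))]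
    exact le_of_mul_le_mul_right h2 hm2
  have hαM : |α - 1| ≤ M := by
    have := abs_nonneg (r - 1)
    have := abs_nonneg (β - 1)
    linarith
  have hβM : |β - 1| ≤ M := by
    have := abs_nonneg (r - 1)
    have := abs_nonneg (α - 1)
    linarith
  set p : ℝ → ℝ := fun t => c * (1 - (1 - (t - u) / (v - u)) ^ (m + 3) - ((t - u) / (v - u)) ^ (m + 3))
    + α * (1 - (t - u) / (v - u)) ^ (m + 3) + β * ((t - u) / (v - u)) ^ (m + 3) with hp
  have hpc : Continuous p := by rw [hp]; fun_prop
  refine ⟨p, hpc, ?_, ?_, ?_, ?_⟩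
  · simp [hp]
  · simp [hp, div_self hvu.ne']
  · have hd : ∀ t ∈ Set.uIcc u v, HasDerivAt (fun t => c * t
        + (v - u) / (m + 4) * ((c - α) * (1 - (t - u) / (v - u)) ^ (m + 4)
        + (β - c) * ((t - u) / (v - u)) ^ (m + 4))) (p t) t := by
      intro t _
      have h1 : HasDerivAt (fun t => (t - u) / (v - u)) (1 / (v - u)) t :=
        ((hasDerivAt_id t).sub_const u).div_const _
      have h2 := (h1.const_sub 1).pow (m + 4)
      have h3 := h1.pow (m + 4)
      refine HasDerivAt.congr_deriv (((hasDerivAt_id t).const_mul c).add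
        (((h2.const_mul (c - α)).add (h3.const_mul (β - c))).const_mul ((v - u) / (m + 4)))) ?_
      have h4 : (m:ℝ) + 4 ≠ 0 := by linarith
      have h5 : m + 4 - 1 = m + 3 := by omega
      simp only [hp, h5]
      push_cast
      generalize (t - u) / (v - u) = s
      field_simp
      ring
    rw [intervalIntegral.integral_eq_sub_of_hasDerivAt hd (hpc.intervalIntegrable _ _)]
    have : (m:ℝ) + 4 ≠ 0 := by linarith
    simp [div_self hvu.ne']
    field_simp
    linear_combination (v - u) * hceq
  · intro t ht
    have hs0 : 0 ≤ (t - u) / (v - u) := div_nonneg (by linarith [ht.1]) hvu.le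
    have hs1 : (t - u) / (v - u) ≤ 1 := by rw [div_le_one hvu]; linarith [ht.2]
    simp only [hp]
    generalize (t - u) / (v - u) = s at hs0 hs1
    have w1 : 0 ≤ (1 - s) ^ (m + 3) := pow_nonneg (by linarith) _
    have w2 : 0 ≤ s ^ (m + 3) := pow_nonneg hs0 _
    have w3 : (1 - s) ^ (m + 3) ≤ 1 - s := pow_le_of_le_one (by linarith) (by linarith) (by omega)
    have w4 : s ^ (m + 3) ≤ s := pow_le_of_le_one hs0 hs1 (by omega)
    have w5 : 0 < s ^ (m + 3) ∨ 0 < (1 - s) ^ (m + 3) := by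
      rcases hs0.eq_or_lt with h | h
      · right; rw [← h]; simp
      · left; positivity
    generalize (1 - s) ^ (m + 3) = y at *
    generalize s ^ (m + 3) = z at *
    have w6 : 0 ≤ 1 - y - z := by linarith
    constructor
    · rcases w5 with h | h
      · have := mul_pos hβ h
        have := mul_nonneg hcpos.le w6
        have := mul_nonneg hα.le w1
        linarith
      · have := mul_pos hα h
        have := mul_nonneg hcpos.le w6
        have := mul_nonneg hβ.le w2
        linarith
    · rw [abs_le] at *
      constructor <;> nlinarith

lemma aux_half (g : ℝ → ℝ) (hg : ContDiff ℝ 1 g) (hpos : ∀ t, 0 < deriv g t)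
    (u v α β : ℝ) (huv : u < v) (hα : 0 < α) (hβ : 0 < β) :
    ∃ q : ℝ → ℝ, Continuous q ∧ (∀ t ≤ u, q t = α - deriv g u) ∧ (∀ t ≥ v, q t = β - deriv g v) ∧
      (∫ t in u..v, q t) = 0 ∧ (∀ t ∈ Set.Icc u v, 0 < deriv g t + q t) ∧
      (∀ η, (∀ t ∈ Set.Icc u v, |deriv g t - 1| ≤ η) → ∀ t, |q t| ≤ 3 * η + |α - 1| + |β - 1|) := by
  have hgd : Differentiable ℝ g := hg.differentiable one_ne_zero
  have hgc : Continuous (deriv g) := hg.continuous_deriv le_rfl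
  obtain ⟨c, hc, hcr⟩ := exists_deriv_eq_slope g huv hgd.continuous.continuousOn hgd.differentiableOn
  obtain ⟨p, hpc, hpu, hpv, hpi, hpb⟩ := aux_profile u v α β (deriv g c) huv hα hβ (hpos c)
  have hcl : ∀ t ∈ Set.Icc u v, max u (min v t) = t := fun t ht => by
    rw [min_eq_right ht.2, max_eq_right ht.1]
  refine ⟨fun t => p (max u (min v t)) - deriv g (max u (min v t)), ?_, ?_, ?_, ?_, ?_, ?_⟩
  · fun_prop
  · intro t ht
    have : max u (min v t) = u := by
      rw [min_eq_right (ht.trans huv.le), max_eq_left ht]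
    simp only [this, hpu]
  · intro t ht
    have : max u (min v t) = v := by
      rw [min_eq_left ht, max_eq_right huv.le]
    simp only [this, hpv]
  · have : ∫ t in u..v, (p (max u (min v t)) - deriv g (max u (min v t))) = ∫ t in u..v, (p t - deriv g t) := by
      apply intervalIntegral.integral_congr
      intro t ht
      rw [Set.uIcc_of_le huv.le] at ht
      simp only [hcl t ht]
    rw [this, intervalIntegral.integral_sub (hpc.intervalIntegrable _ _) (hgc.intervalIntegrable _ _), hpi,
      intervalIntegral.integral_deriv_eq_sub (fun t _ => hgd t) (hgc.intervalIntegrable _ _), hcr]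
    have : v - u ≠ 0 := by linarith
    field_simp
    ring
  · intro t ht
    simp only [hcl t ht]
    linarith [(hpb t ht).1]
  · intro η hη t
    have hmem : max u (min v t) ∈ Set.Icc u v := ⟨le_max_left _ _, max_le huv.le (min_le_left _ _)⟩
    have h1 := (hpb _ hmem).2
    have h2 := hη _ hmem
    have h3 := hη c ⟨hc.1.le, hc.2.le⟩
    have h4 := abs_sub (p (max u (min v t)) - 1) (deriv g (max u (min v t)) - 1)
    have h5 : p (max u (min v t)) - 1 - (deriv g (max u (min v t)) - 1) = p (max u (min v t)) - deriv g (max u (min v t)) := by ring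
    rw [h5] at h4
    simp only
    linarith

lemma aux_bump (g : ℝ → ℝ) (hg : ContDiff ℝ 1 g) (hpos : ∀ t, 0 < deriv g t)
    (a x b βL βR : ℝ) (hax : a < x) (hxb : x < b) (hga : deriv g a = 1) (hgb : deriv g b = 1)
    (hL : 0 < βL) (hR : 0 < βR) :
    ∃ B qL qR : ℝ → ℝ, Continuous qL ∧ Continuous qR ∧ Continuous B ∧
      (∀ t ≤ a, qL t = 0) ∧ (∀ t ≥ b, qR t = 0) ∧ qL x = βL - deriv g x ∧ qR x = βR - deriv g x ∧
      (∀ t, t ≤ a ∨ b ≤ t → B t = 0) ∧ B x = 0 ∧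
      (∀ t < x, HasStrictDerivAt B (qL t) t) ∧ (∀ t > x, HasStrictDerivAt B (qR t) t) ∧
      (∀ t ≤ x, HasDerivWithinAt B (qL t) (Set.Iic x) t) ∧
      (∀ t ≥ x, HasDerivWithinAt B (qR t) (Set.Ici x) t) ∧
      (∀ t ∈ Set.Icc a x, 0 < deriv g t + qL t) ∧ (∀ t ∈ Set.Icc x b, 0 < deriv g t + qR t) ∧
      (∀ η, (∀ t ∈ Set.Icc a b, |deriv g t - 1| ≤ η) → ∀ s t,
        |B t - B s| ≤ (6 * η + |βL - 1| + |βR - 1|) * |t - s|) := by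
  obtain ⟨qL, cL, zL, eL, iL, pL, bL⟩ := aux_half g hg hpos a x 1 βL hax one_pos hL
  obtain ⟨qR, cR, eR, zR, iR, pR, bR⟩ := aux_half g hg hpos x b βR 1 hxb hR one_pos
  have zL' : ∀ t ≤ a, qL t = 0 := fun t ht => by rw [zL t ht, hga, sub_self]
  have zR' : ∀ t ≥ b, qR t = 0 := fun t ht => by rw [zR t ht, hgb, sub_self]
  have dL : ∀ t, HasStrictDerivAt (fun t => ∫ w in x..t, qL w) (qL t) t :=
    fun t => cL.integral_hasStrictDerivAt x t
  have dR : ∀ t, HasStrictDerivAt (fun t => ∫ w in x..t, qR w) (qR t) t :=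
    fun t => cR.integral_hasStrictDerivAt x t
  set QL : ℝ → ℝ := fun t => ∫ w in x..t, qL w with hQL
  set QR : ℝ → ℝ := fun t => ∫ w in x..t, qR w with hQR
  have QL0 : QL x = 0 := by simp [hQL]
  have QR0 : QR x = 0 := by simp [hQR]
  have ccL : Continuous QL := continuous_iff_continuousAt.2 fun t => (dL t).hasDerivAt.continuousAt
  have ccR : Continuous QR := continuous_iff_continuousAt.2 fun t => (dR t).hasDerivAt.continuousAt
  set B : ℝ → ℝ := fun t => QL (min t x) + QR (max t x) with hB
  have Ble : ∀ t ≤ x, B t = QL t := fun t ht => by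
    simp [hB, min_eq_left ht, max_eq_right ht, QR0]
  have Bge : ∀ t, x ≤ t → B t = QR t := fun t ht => by
    simp [hB, min_eq_right ht, max_eq_left ht, QL0]
  refine ⟨B, qL, qR, cL, cR, by fun_prop, zL', zR', eL x le_rfl, eR x le_rfl, ?_, ?_, ?_, ?_, ?_, ?_, pL, pR, ?_⟩
  · rintro t (ht | ht)
    · rw [Ble t (ht.trans hax.le)]
      simp only [hQL]
      rw [← intervalIntegral.integral_add_adjacent_intervals (b := a) (cL.intervalIntegrable _ _)
        (cL.intervalIntegrable _ _), intervalIntegral.integral_symm, iL]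
      have : ∫ w in a..t, qL w = ∫ w in a..t, (0:ℝ) := by
        apply intervalIntegral.integral_congr
        intro w hw
        rw [Set.uIcc_of_ge ht] at hw
        exact zL' w hw.2
      rw [this]; simp
    · rw [Bge t (hxb.le.trans ht)]
      simp only [hQR]
      rw [← intervalIntegral.integral_add_adjacent_intervals (b := b) (cR.intervalIntegrable _ _)
        (cR.intervalIntegrable _ _), iR]
      have : ∫ w in b..t, qR w = ∫ w in b..t, (0:ℝ) := by
        apply intervalIntegral.integral_congr
        intro w hw
        rw [Set.uIcc_of_le ht] at hw
        exact zR' w hw.1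
      rw [this]; simp
  · rw [Ble x le_rfl, QL0]
  · intro t ht
    refine (dL t).congr_of_eventuallyEq ?_
    filter_upwards [Iio_mem_nhds ht] with w hw
    exact (Ble w (le_of_lt hw)).symm
  · intro t ht
    refine (dR t).congr_of_eventuallyEq ?_
    filter_upwards [Ioi_mem_nhds ht] with w hw
    exact (Bge w (le_of_lt hw)).symm
  · intro t ht
    exact (dL t).hasDerivAt.hasDerivWithinAt.congr (fun w hw => Ble w hw) (Ble t ht)
  · intro t ht
    exact (dR t).hasDerivAt.hasDerivWithinAt.congr (fun w hw => Bge w hw) (Bge t ht)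
  · intro η hη s t
    have b1 := bL η fun t ht => hη t ⟨ht.1, ht.2.trans hxb.le⟩
    have b2 := bR η fun t ht => hη t ⟨hax.le.trans ht.1, ht.2⟩
    have l1 : ∀ s t, |QL t - QL s| ≤ (3 * η + |βL - 1|) * |t - s| := by
      intro s t
      simp only [hQL]
      rw [intervalIntegral.integral_interval_sub_left (cL.intervalIntegrable _ _) (cL.intervalIntegrable _ _)]
      rw [← Real.norm_eq_abs (∫ _ in s..t, _)]
      apply intervalIntegral.norm_integral_le_of_norm_le_const
      intro w _
      have := b1 w
      simpa using this
    have l2 : ∀ s t, |QR t - QR s| ≤ (3 * η + |βR - 1|) * |t - s| := by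
      intro s t
      simp only [hQR]
      rw [intervalIntegral.integral_interval_sub_left (cR.intervalIntegrable _ _) (cR.intervalIntegrable _ _)]
      rw [← Real.norm_eq_abs (∫ _ in s..t, _)]
      apply intervalIntegral.norm_integral_le_of_norm_le_const
      intro w _
      have := b2 w
      simpa using this
    have hη0 : 0 ≤ η := (abs_nonneg _).trans (hη x ⟨hax.le, hxb.le⟩)
    have m1 : |min t x - min s x| ≤ |t - s| := by
      simpa using abs_min_sub_min_le_max t x s x
    have m2 : |max t x - max s x| ≤ |t - s| := abs_max_sub_max_le_abs t s x
    have t1 := (l1 (min s x) (min t x)).trans (mul_le_mul_of_nonneg_left m1 (by positivity))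
    have t2 := (l2 (max s x) (max t x)).trans (mul_le_mul_of_nonneg_left m2 (by positivity))
    have t3 := abs_add_le (QL (min t x) - QL (min s x)) (QR (max t x) - QR (max s x))
    have t4 : QL (min t x) - QL (min s x) + (QR (max t x) - QR (max s x)) = B t - B s := by
      simp only [hB]; ring
    rw [t4] at t3
    linarith

lemma aux_strict {ι : Type} (B : ι → ℝ → ℝ)
    (hdisj : ∀ i j t, B i t ≠ 0 → B j t ≠ 0 → i = j) (τ : ℝ)
    (h0 : ∀ i, HasStrictDerivAt (B i) 0 τ)
    (hlip : ∀ ε : ℝ, 0 < ε → ∃ S : Finset ι, ∃ U ∈ 𝓝 τ, ∀ i ∉ S, ∀ s ∈ U, ∀ t ∈ U,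
      |B i t - B i s| ≤ ε * |t - s|) :
    HasStrictDerivAt (fun t => ∑ᶠ i, B i t) 0 τ := by
  classical
  rw [hasStrictDerivAt_iff_hasStrictFDerivAt, hasStrictFDerivAt_iff_isLittleO, Asymptotics.isLittleO_iff]
  intro c hc
  obtain ⟨S, U, hU, hS⟩ := hlip (c / 4) (by linarith)
  have hsum : HasStrictDerivAt (fun t => ∑ i ∈ S, B i t) 0 τ := by
    have := HasStrictDerivAt.fun_sum (u := S) (A := B) (A' := fun _ => (0:ℝ)) (x := τ) (fun i _ => h0 i)
    simpa using this
  rw [hasStrictDerivAt_iff_hasStrictFDerivAt, hasStrictFDerivAt_iff_isLittleO, Asymptotics.isLittleO_iff] at hsum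
  have hc2 : 0 < c / 2 := by linarith
  filter_upwards [hsum hc2, prod_mem_nhds hU hU] with ⟨t, s⟩ h1 h2
  simp only [Set.mem_prod] at h2
  simp only [ContinuousLinearMap.toSpanSingleton_apply, smul_zero, sub_zero, Real.norm_eq_abs] at h1 ⊢
  have key : ∀ t, ((∀ i ∉ S, B i t = 0) ∧ (∑ᶠ i, B i t) - ∑ i ∈ S, B i t = 0) ∨
      ∃ j ∉ S, (∑ᶠ i, B i t) - ∑ i ∈ S, B i t = B j t ∧ ∀ i, i ≠ j → B i t = 0 := by
    intro t
    by_cases hall : ∀ i ∉ S, B i t = 0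
    · left
      refine ⟨hall, ?_⟩
      rw [finsum_eq_sum_of_support_subset, sub_self]
      intro i hi
      by_contra hcon
      exact hi (hall i hcon)
    · right
      push Not at hall
      obtain ⟨j, hj, hjt⟩ := hall
      have hz : ∀ i, i ≠ j → B i t = 0 := by
        intro i hij
        by_contra hcon
        exact hij (hdisj i j t hcon hjt)
      refine ⟨j, hj, ?_, hz⟩
      rw [finsum_eq_single _ j hz, Finset.sum_eq_zero, sub_zero]
      intro i hi
      exact hz i (fun h => hj (h ▸ hi))
  have main : |((∑ᶠ i, B i t) - ∑ i ∈ S, B i t) - ((∑ᶠ i, B i s) - ∑ i ∈ S, B i s)| ≤ c / 2 * |t - s| := by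
    have hn : 0 ≤ c / 4 * |t - s| := by positivity
    rcases key t with ⟨ha, hb⟩ | ⟨j, hj, hb, ha⟩ <;> rcases key s with ⟨ha', hb'⟩ | ⟨j', hj', hb', ha'⟩ <;>
      rw [hb, hb']
    · simp; positivity
    · have := hS j' hj' s h2.2 t h2.1
      rw [ha j' hj'] at this
      linarith
    · have := hS j hj s h2.2 t h2.1
      rw [ha' j hj] at this
      linarith
    · by_cases hjj : j = j'
      · subst hjj
        have := hS j hj s h2.2 t h2.1
        linarith
      · have e1 := hS j hj s h2.2 t h2.1
        have e2 := hS j' hj' s h2.2 t h2.1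
        rw [ha' j hjj] at e1
        rw [ha j' (Ne.symm hjj)] at e2
        have := abs_add_le (B j t - 0) (0 - B j' s)
        have e3 : B j t - 0 + (0 - B j' s) = B j t - B j' s := by ring
        rw [e3] at this
        linarith
  have := abs_add_le (((∑ᶠ i, B i t) - ∑ i ∈ S, B i t) - ((∑ᶠ i, B i s) - ∑ i ∈ S, B i s))
    (∑ i ∈ S, B i t - ∑ i ∈ S, B i s)
  have e : ((∑ᶠ i, B i t) - ∑ i ∈ S, B i t) - ((∑ᶠ i, B i s) - ∑ i ∈ S, B i s) + (∑ i ∈ S, B i t - ∑ i ∈ S, B i s)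
    = (∑ᶠ i, B i t) - ∑ᶠ i, B i s := by ring
  rw [e] at this
  linarith

lemma aux_mono (h : ℝ → ℝ) (hc : Continuous h)
    (hd : ∀ t, ∃ d, 0 < d ∧ HasDerivWithinAt h d (Set.Ici t) t) : StrictMono h := by
  choose d hd0 hd using hd
  have hm : Monotone h := by
    intro s t hst
    have := image_le_of_deriv_right_lt_deriv_boundary (f := fun t => - h t) (f' := fun t => - d t)
      (a := s) (b := t) (B := fun _ => - h s) (B' := fun _ => 0) hc.neg.continuousOn
      (fun w _ => (hd w).fun_neg) le_rfl (fun w => hasDerivAt_const _ _)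
      (fun w _ _ => by simpa using hd0 w) (Set.right_mem_Icc.2 hst)
    simpa using this
  intro s t hst
  refine lt_of_le_of_ne (hm hst.le) fun heq => ?_
  have hconst : HasDerivWithinAt h 0 (Set.Icc s t) s := by
    refine (hasDerivWithinAt_const s (Set.Icc s t) (h s)).congr (fun w hw => ?_) rfl
    exact le_antisymm ((hm hw.2).trans heq.ge) (hm hw.1)
  have h2 : HasDerivWithinAt h (d s) (Set.Icc s t) s := (hd s).mono Set.Icc_subset_Ici_self
  have := (uniqueDiffOn_Icc hst s (Set.left_mem_Icc.2 hst.le)).eq_deriv _ hconst h2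
  linarith [hd0 s]

lemma aux_shift {B : ℝ → ℝ} {d t c : ℝ} (h : HasStrictDerivAt B d (t - c)) :
    HasStrictDerivAt (fun w => B (w - c)) d t := by
  have h3 : HasStrictDerivAt (fun w : ℝ => w - c) 1 t := (hasStrictDerivAt_id t).sub_const c
  have := HasStrictDerivAt.comp t h h3
  rwa [mul_one] at this

lemma aux_gap (K : Set ℝ) (a b a' b' t : ℝ) (ha' : a' ∈ K) (h : Set.Ioo a b ∩ K = ∅)
    (ht : t ∈ Set.Ioo a b) (ht' : t ∈ Set.Ioo a' b') : a' ≤ a := by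
  by_contra hc
  push Not at hc
  have : a' ∈ Set.Ioo a b ∩ K := ⟨⟨hc, ht'.1.trans ht.2⟩, ha'⟩
  rw [h] at this
  exact this

lemma aux_per (g : ℝ → ℝ) (hg_lift : ∀ t : ℝ, g (t + 1) = g t + 1) (n : ℤ) (t : ℝ) :
    g (t + n) = g t + n := by
  induction n using Int.induction_on with
  | zero => simp
  | succ i ih => push_cast at *; rw [← add_assoc, hg_lift, ih]; ring
  | pred i ih =>
    have := hg_lift (t + ((-(i:ℤ) - 1 : ℤ) : ℝ))
    push_cast at *
    have e : t + (-(i:ℝ) - 1) + 1 = t + -(i:ℝ) := by ring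
    rw [e] at this
    linarith

lemma aux_perK (K : Set ℝ) (hK_per : ∀ t ∈ K, t + 1 ∈ K ∧ t - 1 ∈ K) (n : ℤ) (t : ℝ) (ht : t ∈ K) :
    t + n ∈ K := by
  induction n using Int.induction_on with
  | zero => simpa
  | succ i ih => have := (hK_per _ ih).1; push_cast at *; rwa [← add_assoc]
  | pred i ih => have := (hK_per _ ih).2; push_cast at *; rwa [← add_sub_assoc]

lemma aux_rot (g : ℝ → ℝ) (hg_lift : ∀ t : ℝ, g (t + 1) = g t + 1) (ρ : ℝ) (hρ_irr : Irrational ρ)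
    (hρ : ∀ t : ℝ, Tendsto (fun n : ℕ => (g^[n] t - t) / n) atTop (𝓝 ρ))
    (p : ℕ) (hp : 0 < p) (q : ℤ) (t : ℝ) (h : g^[p] t = t + q) : False := by
  have hper : ∀ n : ℕ, ∀ m : ℤ, ∀ t : ℝ, g^[n] (t + m) = g^[n] t + m := by
    intro n m
    induction n with
    | zero => simp
    | succ n ih => intro t; rw [Function.iterate_succ_apply, Function.iterate_succ_apply,
        aux_per g hg_lift, ih]
  have hit : ∀ i : ℕ, g^[p * i] t = t + i * q := by
    intro i
    induction i with
    | zero => simp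
    | succ i ih =>
      rw [Nat.mul_succ, Function.iterate_add_apply, h, hper, ih]
      push_cast; ring
  have ht : Tendsto (fun i : ℕ => p * (i + 1)) atTop atTop :=
    (tendsto_add_atTop_nat 1).const_mul_atTop' hp
  have h1 := (hρ t).comp ht
  have h2 : ((fun n : ℕ => (g^[n] t - t) / n) ∘ fun i : ℕ => p * (i + 1)) = fun _ => (q:ℝ) / p := by
    funext i
    simp only [Function.comp, hit]
    push_cast
    have : (p:ℝ) ≠ 0 := by positivity
    have : (i:ℝ) + 1 ≠ 0 := by positivity
    field_simp
    ring
  rw [h2] at h1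
  have := tendsto_nhds_unique h1 tendsto_const_nhds
  apply hρ_irr
  exact ⟨(q:ℚ) / p, by rw [this]; push_cast; rfl⟩

lemma aux_disj
    (g : ℝ → ℝ) (hg_mono : StrictMono g)
    (hg_lift : ∀ t : ℝ, g (t + 1) = g t + 1)
    (ρ : ℝ) (hρ_irr : Irrational ρ)
    (hρ : ∀ t : ℝ, Tendsto (fun n : ℕ => (g^[n] t - t) / n) atTop (𝓝 ρ))
    (K : Set ℝ)
    (hK_per : ∀ t ∈ K, t + 1 ∈ K ∧ t - 1 ∈ K)
    (hK_inv : g '' K = K)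
    (x : ℤ → ℝ) (hx : ∀ k : ℤ, x (k + 1) = g (x k))
    (a b : ℤ → ℝ)
    (hxI : ∀ k : ℤ, x k ∈ Set.Ioo (a k) (b k))
    (ha : ∀ k : ℤ, a k ∈ K)
    (hIK : ∀ k : ℤ, Set.Ioo (a k) (b k) ∩ K = ∅) (k j n m : ℤ) (t : ℝ)
    (h1 : t - n ∈ Set.Ioo (a k) (b k)) (h2 : t - m ∈ Set.Ioo (a j) (b j)) : k = j ∧ n = m := by
  have hstep : ∀ k, a (k + 1) = g (a k) := by
    intro k
    apply le_antisymm
    · by_contra hc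
      push Not at hc
      have hmem := ha (k + 1)
      rw [← hK_inv] at hmem
      obtain ⟨y, hy, hye⟩ := hmem
      rw [← hye] at hc
      have h3 : a k < y := hg_mono.lt_iff_lt.1 hc
      have h4 : g y < g (x k) := by rw [hye, ← hx]; exact (hxI _).1
      have h5 : y < x k := hg_mono.lt_iff_lt.1 h4
      have : y ∈ Set.Ioo (a k) (b k) ∩ K := ⟨⟨h3, h5.trans (hxI k).2⟩, hy⟩
      rw [hIK] at this
      exact this
    · by_contra hc
      push Not at hc
      have : g (a k) ∈ Set.Ioo (a (k+1)) (b (k+1)) ∩ K := by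
        refine ⟨⟨hc, ?_⟩, ?_⟩
        · have := hg_mono (hxI k).1
          rw [← hx] at this
          exact this.trans (hxI _).2
        · rw [← hK_inv]; exact ⟨_, ha k, rfl⟩
      rw [hIK] at this
      exact this
  have hiter : ∀ p : ℕ, ∀ k, a (k + p) = g^[p] (a k) := by
    intro p
    induction p with
    | zero => simp
    | succ p ih =>
      intro k
      rw [Function.iterate_succ_apply', ← ih, ← hstep]
      push_cast; ring_nf
  have heq : ∀ k j n m : ℤ, t - n ∈ Set.Ioo (a k) (b k) → t - m ∈ Set.Ioo (a j) (b j) →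
      a j + m ≤ a k + n := by
    intro k j n m h1 h2
    have := aux_gap K (a k) (b k) (a j + m - n) (b j + m - n) (t - n) ?_ (hIK k) h1
      ⟨by linarith [h2.1], by linarith [h2.2]⟩
    · linarith
    · have := aux_perK K hK_per (m - n) _ (ha j)
      push_cast at this
      rwa [← add_sub_assoc] at this
  have e : a j + m = a k + n := le_antisymm (heq k j n m h1 h2) (heq j k m n h2 h1)
  rcases lt_trichotomy k j with hkj | hkj | hkj
  · exfalso
    obtain ⟨p, hp⟩ := Int.eq_ofNat_of_zero_le (sub_nonneg.2 hkj.le)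
    have hj : j = k + p := by omega
    rw [hj, hiter] at e
    exact aux_rot g hg_lift ρ hρ_irr hρ p (by omega) (n - m) (a k) (by push_cast; linarith)
  · subst hkj
    refine ⟨rfl, ?_⟩
    have : (m:ℝ) = n := by linarith
    exact_mod_cast this.symm
  · exfalso
    obtain ⟨p, hp⟩ := Int.eq_ofNat_of_zero_le (sub_nonneg.2 hkj.le)
    have hj : k = j + p := by omega
    rw [hj, hiter] at e
    exact aux_rot g hg_lift ρ hρ_irr hρ p (by omega) (m - n) (a j) (by push_cast; linarith)

/-- Proposition 1 of the paper, stated for lifts to `ℝ` of circle maps (the circle is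
`ℝ/ℤ`, so circle maps are encoded by strictly increasing bijections of `ℝ` commuting with
`t ↦ t + 1`, and subsets of the circle by `ℤ`-translation-invariant subsets of `ℝ`).

Let `g` be an orientation-preserving `C¹` diffeomorphism of the circle with irrational
rotation number `ρ`, whose unique minimal set is a Cantor set `K`, with `g' = 1` on `K`,
and such that for every `ε > 0` all but finitely many connected components
`I k = (a k, b k)` of the complement of `K` satisfy `sup_{I k} |g' − 1| < ε`.
Let `x 0 ∉ K`, `x (k+1) = g (x k)`, with `x k` in the component `(a k, b k)`, and let
`βL, βR : ℤ → ℝ` be positive with `βL k → 1` and `βR k → 1` as `|k| → ∞`.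
Then there is an orientation-preserving circle homeomorphism `h` with: `h = g` on `K` and
on the orbit `(x k)`; `h` is `C¹` on each half-interval `(a k, x k]` and `[x k, b k)`;
`h` has left derivative `βL k` and right derivative `βR k` at `x k`; `h` is differentiable
on `K` with derivative `1`; and `h` and `h⁻¹` are `C¹` (strictly differentiable) at every
point not on the (projected) orbit of `x 0`. -/
theorem modified_denjoy_exists
    (g : ℝ → ℝ) (hg_mono : StrictMono g) (hg_bij : Function.Bijective g)
    (hg_lift : ∀ t : ℝ, g (t + 1) = g t + 1)
    (hg_C1 : ContDiff ℝ 1 g) (hg_deriv_pos : ∀ t : ℝ, 0 < deriv g t)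
    (ρ : ℝ) (hρ_irr : Irrational ρ)
    (hρ : ∀ t : ℝ, Tendsto (fun n : ℕ => (g^[n] t - t) / n) atTop (𝓝 ρ))
    (K : Set ℝ) (hK_closed : IsClosed K) (hK_ne : K.Nonempty)
    (hK_per : ∀ t ∈ K, t + 1 ∈ K ∧ t - 1 ∈ K)
    (hK_inv : g '' K = K)
    (hK_int : interior K = ∅)
    (hK_perfect : ∀ t ∈ K, t ∈ closure (K \ {t}))
    (hK_min : ∀ S : Set ℝ, S.Nonempty → IsClosed S →
        (∀ t ∈ S, g t ∈ S ∧ t + 1 ∈ S ∧ t - 1 ∈ S) → K ⊆ S)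
    (hg'K : ∀ t ∈ K, deriv g t = 1)
    (x : ℤ → ℝ) (hx0 : x 0 ∉ K) (hx : ∀ k : ℤ, x (k + 1) = g (x k))
    (a b : ℤ → ℝ)
    (hxI : ∀ k : ℤ, x k ∈ Set.Ioo (a k) (b k))
    (ha : ∀ k : ℤ, a k ∈ K) (hb : ∀ k : ℤ, b k ∈ K)
    (hIK : ∀ k : ℤ, Set.Ioo (a k) (b k) ∩ K = ∅)
    (hsmall : ∀ ε : ℝ, 0 < ε → ∃ N : ℕ, ∀ k : ℤ, (N : ℤ) ≤ |k| →
        ∀ t ∈ Set.Ioo (a k) (b k), |deriv g t - 1| < ε)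
    (βL βR : ℤ → ℝ) (hβL_pos : ∀ k, 0 < βL k) (hβR_pos : ∀ k, 0 < βR k)
    (hβL_lim : Tendsto βL atTop (𝓝 1) ∧ Tendsto βL atBot (𝓝 1))
    (hβR_lim : Tendsto βR atTop (𝓝 1) ∧ Tendsto βR atBot (𝓝 1)) :
    ∃ h : ℝ → ℝ,
      StrictMono h ∧ Continuous h ∧ Function.Bijective h ∧
      (∀ t : ℝ, h (t + 1) = h t + 1) ∧
      (∀ t ∈ K, h t = g t) ∧ (∀ k : ℤ, h (x k) = g (x k)) ∧
      (∀ k : ℤ, ∃ d : ℝ → ℝ, ContinuousOn d (Set.Ioc (a k) (x k)) ∧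
          ∀ t ∈ Set.Ioc (a k) (x k), HasDerivWithinAt h (d t) (Set.Ioc (a k) (x k)) t) ∧
      (∀ k : ℤ, ∃ d : ℝ → ℝ, ContinuousOn d (Set.Ico (x k) (b k)) ∧
          ∀ t ∈ Set.Ico (x k) (b k), HasDerivWithinAt h (d t) (Set.Ico (x k) (b k)) t) ∧
      (∀ k : ℤ, HasDerivWithinAt h (βL k) (Set.Iio (x k)) (x k)) ∧
      (∀ k : ℤ, HasDerivWithinAt h (βR k) (Set.Ioi (x k)) (x k)) ∧
      (∀ t ∈ K, HasDerivAt h 1 t) ∧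
      (∀ t : ℝ, (∀ k n : ℤ, t ≠ x k + n) → ∃ d : ℝ, HasStrictDerivAt h d t) ∧
      (∀ s : ℝ, (∀ k n : ℤ, s ≠ g (x k) + n) →
          ∃ d : ℝ, HasStrictDerivAt (Function.invFun h) d s) := by
  have hgd : Differentiable ℝ g := hg_C1.differentiable one_ne_zero
  have hgs : ∀ t, HasStrictDerivAt g (deriv g t) t := fun t =>
    hg_C1.contDiffAt.hasStrictDerivAt one_ne_zero
  have hgper := aux_per g hg_lift
  have hdper : ∀ (n : ℤ) (t : ℝ), deriv g (t - n) = deriv g t := by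
    intro n t
    have h1 : HasDerivAt g (deriv g t) (t - n + n) := by
      rw [sub_add_cancel]; exact (hgd t).hasDerivAt
    have h2 := (h1.comp_add_const (t - n) n).sub_const (n : ℝ)
    have h3 : (fun y => g (y + n) - n) = g := by
      funext y; rw [hgper]; ring
    rw [h3] at h2
    exact h2.deriv
  have hdisj := aux_disj g hg_mono hg_lift ρ hρ_irr hρ K hK_per hK_inv x hx a b hxI ha hIK
  choose B qL qR hqLc hqRc hBc hqLz hqRz hqLx hqRx hBz hBx hBsL hBsR hBdL hBdR hposL hposR hBlip using
    fun k : ℤ => aux_bump g hg_C1 hg_deriv_pos (a k) (x k) (b k) (βL k) (βR k) (hxI k).1 (hxI k).2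
      (hg'K _ (ha k)) (hg'K _ (hb k)) (hβL_pos k) (hβR_pos k)
  set BB : ℤ × ℤ → ℝ → ℝ := fun i t => B i.1 (t - i.2) with hBB
  have hBBmem : ∀ i t, BB i t ≠ 0 → t - i.2 ∈ Set.Ioo (a i.1) (b i.1) := by
    intro i t hne
    by_contra hcon
    apply hne
    apply hBz
    by_contra hcon2
    push Not at hcon2
    exact hcon hcon2
  have hBBdisj : ∀ i j t, BB i t ≠ 0 → BB j t ≠ 0 → i = j := by
    intro i j t h1 h2
    have := hdisj _ _ _ _ t (hBBmem i t h1) (hBBmem j t h2)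
    exact Prod.ext this.1 this.2
  set f : ℝ → ℝ := fun t => ∑ᶠ i, BB i t with hf
  have hloc : ∀ (k n : ℤ) (t : ℝ), t - n ∈ Set.Ioo (a k) (b k) → f t = B k (t - n) := by
    intro k n t ht
    refine finsum_eq_single (fun i => BB i t) (k, n) (fun i hi => ?_)
    by_contra hcon
    have := hdisj _ _ _ _ t (hBBmem i t hcon) ht
    exact hi (Prod.ext this.1 this.2)
  have hout0 : ∀ t : ℝ, (∀ k n : ℤ, t - n ∉ Set.Ioo (a k) (b k)) → f t = 0 := by
    intro t ht
    refine finsum_eq_zero_of_forall_eq_zero fun i => ?_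
    by_contra hcon
    exact ht _ _ (hBBmem i t hcon)
  -- tail smallness
  have hβ : ∀ β : ℤ → ℝ, Tendsto β atTop (𝓝 1) ∧ Tendsto β atBot (𝓝 1) → ∀ ε : ℝ, 0 < ε →
      ∃ N : ℤ, ∀ k : ℤ, N ≤ |k| → |β k - 1| < ε := by
    rintro β ⟨h1, h2⟩ ε hε
    obtain ⟨N1, hN1⟩ := eventually_atTop.1 (Metric.tendsto_nhds.1 h1 ε hε)
    obtain ⟨N2, hN2⟩ := eventually_atBot.1 (Metric.tendsto_nhds.1 h2 ε hε)
    refine ⟨max N1 (-N2), fun k hk => ?_⟩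
    rcases abs_choice k with h | h <;> rw [h] at hk
    · exact hN1 k ((le_max_left _ _).trans hk)
    · exact hN2 k (by have := (le_max_right N1 (-N2)).trans hk; omega)
  have htail : ∀ ε : ℝ, 0 < ε → ∃ N : ℤ, ∀ k : ℤ, N ≤ |k| → ∀ s t,
      |B k t - B k s| ≤ ε * |t - s| := by
    intro ε hε
    obtain ⟨N1, h1⟩ := hβ βL hβL_lim (ε / 4) (by linarith)
    obtain ⟨N2, h2⟩ := hβ βR hβR_lim (ε / 4) (by linarith)
    obtain ⟨N3, h3⟩ := hsmall (ε / 12) (by linarith)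
    refine ⟨max N1 (max N2 N3), fun k hk s t => ?_⟩
    have k1 := h1 k ((le_max_left _ _).trans hk)
    have k2 := h2 k (((le_max_left _ _).trans (le_max_right _ _)).trans hk)
    have k3 := h3 k (((le_max_right _ _).trans (le_max_right _ _)).trans hk)
    refine (hBlip k (ε / 12) ?_ s t).trans ?_
    · intro t ht
      rcases eq_or_lt_of_le ht.1 with e | l1
      · rw [← e, hg'K _ (ha k)]; simp; positivity
      rcases eq_or_lt_of_le ht.2 with e | l2
      · rw [e, hg'K _ (hb k)]; simp; positivity
      exact (k3 t ⟨l1, l2⟩).le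
    · exact mul_le_mul_of_nonneg_right (by linarith) (abs_nonneg _)
  have hBsO : ∀ k t, t ∉ Set.Ioo (a k) (b k) → HasStrictDerivAt (B k) 0 t := by
    intro k t ht
    rcases le_or_gt t (a k) with h | h
    · have := hBsL k t (h.trans_lt (hxI k).1)
      rwa [hqLz k t h] at this
    · have h' : b k ≤ t := by
        by_contra hcon
        exact ht ⟨h, not_le.1 hcon⟩
      have := hBsR k t ((hxI k).2.trans_le h')
      rwa [hqRz k t h'] at this
  have hout : ∀ t : ℝ, (∀ k n : ℤ, t - n ∉ Set.Ioo (a k) (b k)) → HasStrictDerivAt f 0 t := by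
    intro τ hτ
    apply aux_strict BB hBBdisj
    · rintro ⟨k, n⟩
      exact aux_shift (hBsO k (τ - n) (hτ k n))
    · intro ε hε
      obtain ⟨N, hN⟩ := htail ε hε
      have hfin : {i : ℤ × ℤ | |i.1| < N ∧ τ - 1 < b i.1 + i.2 ∧ a i.1 + i.2 < τ + 1}.Finite := by
        have : {i : ℤ × ℤ | |i.1| < N ∧ τ - 1 < b i.1 + i.2 ∧ a i.1 + i.2 < τ + 1} ⊆
            ⋃ k ∈ Set.Ioo (-N) N, (fun n : ℤ => (k, n)) '' Set.Icc ⌊τ - 1 - b k⌋ ⌈τ + 1 - a k⌉ := by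
          rintro ⟨k, n⟩ ⟨h1, h2, h3⟩
          simp only at h1 h2 h3
          simp only [Set.mem_iUnion]
          refine ⟨k, abs_lt.1 h1, n, ⟨?_, ?_⟩, rfl⟩
          · have : ((⌊τ - 1 - b k⌋ : ℤ) : ℝ) ≤ n := (Int.floor_le _).trans (by linarith)
            exact_mod_cast this
          · have : (n : ℝ) ≤ ((⌈τ + 1 - a k⌉ : ℤ) : ℝ) := le_trans (by linarith) (Int.le_ceil _)
            exact_mod_cast this
        refine Set.Finite.subset ?_ this
        exact (Set.finite_Ioo _ _).biUnion fun k _ => (Set.finite_Icc _ _).image _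
      refine ⟨hfin.toFinset, Set.Ioo (τ - 1) (τ + 1), Ioo_mem_nhds (by linarith) (by linarith), ?_⟩
      rintro ⟨k, n⟩ hi s hs t ht
      by_cases hk : |k| < N
      · have hz : ∀ w : ℝ, w ∈ Set.Ioo (τ - 1) (τ + 1) → BB (k, n) w = 0 := by
          intro w hw
          by_contra hcon
          have := hBBmem _ _ hcon
          apply hi
          simp only [Set.Finite.mem_toFinset, Set.mem_ofPred_eq]
          simp only at this
          exact ⟨hk, by linarith [this.2, hw.1], by linarith [this.1, hw.2]⟩
        rw [hz s hs, hz t ht]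
        simp
        positivity
      · have := hN k (not_lt.1 hk) (s - n) (t - n)
        simp only [hBB]
        rwa [sub_sub_sub_cancel_right] at this
  have hlocE : ∀ (k n : ℤ) (t : ℝ), t - n ∈ Set.Ioo (a k) (b k) →
      (fun w => B k (w - n)) =ᶠ[𝓝 t] f := by
    intro k n t ht
    have : Set.Ioo (a k + n) (b k + n) ∈ 𝓝 t := Ioo_mem_nhds (by linarith [ht.1]) (by linarith [ht.2])
    filter_upwards [this] with w hw
    exact (hloc k n w ⟨by linarith [hw.1], by linarith [hw.2]⟩).symm
  have hfper : ∀ t, f (t + 1) = f t := by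
    intro t
    by_cases hmem : ∃ k n : ℤ, t - n ∈ Set.Ioo (a k) (b k)
    · obtain ⟨k, n, hkn⟩ := hmem
      rw [hloc k n t hkn]
      have e : t + 1 - ((n + 1 : ℤ) : ℝ) = t - n := by push_cast; ring
      rw [hloc k (n + 1) (t + 1) (by rwa [e]), e]
    · push Not at hmem
      rw [hout0 t hmem, hout0]
      intro k n
      have := hmem k (n - 1)
      have e : t + 1 - (n : ℝ) = t - ((n - 1 : ℤ) : ℝ) := by push_cast; ring
      rwa [e]
  have hKout : ∀ t ∈ K, ∀ k n : ℤ, t - n ∉ Set.Ioo (a k) (b k) := by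
    intro t ht k n hcon
    have h1 := aux_perK K hK_per (-n) t ht
    push_cast at h1
    rw [← sub_eq_add_neg] at h1
    have : t - n ∈ Set.Ioo (a k) (b k) ∩ K := ⟨hcon, h1⟩
    rw [hIK] at this
    exact this
  have hxs : ∀ k, x k - ((0 : ℤ) : ℝ) ∈ Set.Ioo (a k) (b k) := fun k => by simpa using hxI k
  have hfx : ∀ k n : ℤ, f (x k + n) = 0 := by
    intro k n
    rw [hloc k n (x k + n) (by rw [add_sub_cancel_right]; exact hxI k), add_sub_cancel_right, hBx]
  set h : ℝ → ℝ := fun t => g t + f t with hh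
  -- strict derivative away from the orbit, positive
  have hstrict : ∀ t : ℝ, (∀ k n : ℤ, t ≠ x k + n) → ∃ d : ℝ, 0 < d ∧ HasStrictDerivAt h d t := by
    intro t ht
    by_cases hmem : ∃ k n : ℤ, t - n ∈ Set.Ioo (a k) (b k)
    · obtain ⟨k, n, hkn⟩ := hmem
      rcases lt_trichotomy (t - n) (x k) with hlt | heq | hgt
      · refine ⟨deriv g t + qL k (t - n), ?_, (hgs t).add
          ((aux_shift (hBsL k _ hlt)).congr_of_eventuallyEq (hlocE k n t hkn))⟩
        have := hposL k (t - n) ⟨hkn.1.le, hlt.le⟩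
        rwa [hdper] at this
      · exact absurd (by linarith) (ht k n)
      · refine ⟨deriv g t + qR k (t - n), ?_, (hgs t).add
          ((aux_shift (hBsR k _ hgt)).congr_of_eventuallyEq (hlocE k n t hkn))⟩
        have := hposR k (t - n) ⟨hgt.le, hkn.2.le⟩
        rwa [hdper] at this
    · push Not at hmem
      refine ⟨deriv g t, hg_deriv_pos t, ?_⟩
      have := (hgs t).add (hout t hmem)
      rwa [add_zero] at this
  have hright : ∀ k n : ℤ, HasDerivWithinAt h (βR k) (Set.Ici (x k + n)) (x k + n) := by
    intro k n
    have hm : x k + n - n ∈ Set.Ioo (a k) (b k) := by rw [add_sub_cancel_right]; exact hxI k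
    have h1 : HasDerivWithinAt (B k) (qR k (x k)) (Set.Ici (x k)) (x k + n - n) := by
      rw [add_sub_cancel_right]; exact hBdR k (x k) le_rfl
    have h2 : HasDerivWithinAt (fun w => B k (w - n)) (qR k (x k)) (Set.Ici (x k + n)) (x k + n) := by
      have h3 : HasDerivWithinAt (fun w : ℝ => w - n) 1 (Set.Ici (x k + n)) (x k + n) :=
        (hasDerivWithinAt_id _ _).sub_const _
      have := HasDerivWithinAt.comp (x k + n) h1 h3 (fun w hw => by
        simp only [Set.mem_Ici] at hw ⊢; linarith)
      rwa [mul_one] at this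
    have h4 : HasDerivWithinAt f (qR k (x k)) (Set.Ici (x k + n)) (x k + n) :=
      h2.congr_of_eventuallyEq ((hlocE k n _ hm).symm.filter_mono nhdsWithin_le_nhds)
        (hlocE k n _ hm).symm.self_of_nhds
    have h5 := (hgs (x k + n)).hasDerivAt.hasDerivWithinAt.add h4
    have h6 := hdper n (x k + n)
    rw [add_sub_cancel_right] at h6
    rw [hqRx, ← h6, add_sub_cancel] at h5
    exact h5
  have hfcont : Continuous f := by
    rw [continuous_iff_continuousAt]
    intro t
    by_cases hmem : ∃ k n : ℤ, t - n ∈ Set.Ioo (a k) (b k)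
    · obtain ⟨k, n, hkn⟩ := hmem
      refine ContinuousAt.congr ?_ (hlocE k n t hkn)
      exact ((hBc k).comp (continuous_id.sub continuous_const)).continuousAt
    · push Not at hmem
      exact (hout t hmem).hasDerivAt.continuousAt
  have hhcont : Continuous h := hgd.continuous.add hfcont
  have hhmono : StrictMono h := by
    apply aux_mono h hhcont
    intro t
    by_cases ht : ∃ k n : ℤ, t = x k + n
    · obtain ⟨k, n, rfl⟩ := ht
      exact ⟨βR k, hβR_pos k, hright k n⟩
    · push Not at ht
      obtain ⟨d, hd, hd'⟩ := hstrict t ht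
      exact ⟨d, hd, hd'.hasDerivAt.hasDerivWithinAt⟩
  have hhper : ∀ t, h (t + 1) = h t + 1 := by
    intro t
    simp only [hh, hg_lift, hfper]; ring
  have hhsurj : Function.Surjective h := by
    let c : CircleDeg1Lift := ⟨⟨h, hhmono.monotone⟩, hhper⟩
    exact hhcont.surjective c.tendsto_atTop c.tendsto_atBot
  have hhbij : Function.Bijective h := ⟨hhmono.injective, hhsurj⟩
  have hhloc : ∀ k, ∀ t ∈ Set.Ioo (a k) (b k), h t = g t + B k t := by
    intro k t ht
    have := hloc k 0 t (by simpa using ht)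
    simp only [hh, this]; simp
  refine ⟨h, hhmono, hhcont, hhbij, hhper, ?_, ?_, ?_, ?_, ?_, ?_, ?_, ?_, ?_⟩
  · intro t ht
    simp only [hh, hout0 t (hKout t ht), add_zero]
  · intro k
    have := hfx k 0
    simp only [Int.cast_zero, add_zero] at this
    simp only [hh, this, add_zero]
  · intro k
    refine ⟨fun t => deriv g t + qL k t,
      ((hg_C1.continuous_deriv le_rfl).add (hqLc k)).continuousOn, fun t ht => ?_⟩
    have := (hgs t).hasDerivAt.hasDerivWithinAt.add
      ((hBdL k t ht.2).mono (Set.Ioc_subset_Iic_self (a := a k)))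
    exact this.congr (fun w hw => hhloc k w ⟨hw.1, hw.2.trans_lt (hxI k).2⟩)
      (hhloc k t ⟨ht.1, ht.2.trans_lt (hxI k).2⟩)
  · intro k
    refine ⟨fun t => deriv g t + qR k t,
      ((hg_C1.continuous_deriv le_rfl).add (hqRc k)).continuousOn, fun t ht => ?_⟩
    have := (hgs t).hasDerivAt.hasDerivWithinAt.add
      ((hBdR k t ht.1).mono (Set.Ico_subset_Ici_self (a := b k)))
    exact this.congr (fun w hw => hhloc k w ⟨(hxI k).1.trans_le hw.1, hw.2⟩)
      (hhloc k t ⟨(hxI k).1.trans_le ht.1, ht.2⟩)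
  · intro k
    have h1 := (hgs (x k)).hasDerivAt.hasDerivWithinAt.add
      ((hBdL k (x k) le_rfl).mono Set.Iio_subset_Iic_self)
    rw [hqLx, add_sub_cancel] at h1
    refine h1.congr_of_eventuallyEq ?_ (hhloc k _ (hxI k))
    apply Filter.Eventually.filter_mono nhdsWithin_le_nhds
    filter_upwards [Ioo_mem_nhds (hxI k).1 (hxI k).2] with w hw
    exact hhloc k w hw
  · intro k
    have := hright k 0
    simp only [Int.cast_zero, add_zero] at this
    exact this.mono Set.Ioi_subset_Ici_self
  · intro t ht
    have := (hgs t).hasDerivAt.add (hout t (hKout t ht)).hasDerivAt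
    rwa [hg'K t ht, add_zero] at this
  · intro t ht
    obtain ⟨d, -, hd⟩ := hstrict t ht
    exact ⟨d, hd⟩
  · intro s hs
    have hri : Function.RightInverse (Function.invFun h) h := Function.rightInverse_invFun hhsurj
    have hli : Function.LeftInverse (Function.invFun h) h := Function.leftInverse_invFun hhmono.injective
    have hne : ∀ k n : ℤ, Function.invFun h s ≠ x k + n := by
      intro k n hcon
      apply hs k n
      rw [← hri s, hcon]
      simp only [hh, hfx, hgper, add_zero]
    obtain ⟨d, hd, hd'⟩ := hstrict _ hne
    have hmi : Monotone (Function.invFun h) := by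
      intro p q hpq
      rw [← hhmono.le_iff_le, hri, hri]
      exact hpq
    have hci : Continuous (Function.invFun h) := hmi.continuous_of_surjective hli.surjective
    exact ⟨d⁻¹, hd'.of_local_left_inverse hci.continuousAt hd.ne' (Eventually.of_forall hri)⟩
end

section
/- Let m < 2. Then m − 1/t < t for every t > 0; in particular Φ_m has no fixed point in (0, ∞). Moreover, there is no sequence (t_n)_{n∈ℕ} of positive real numbers satisfying t_{n+1} = m − 1/t_n for all n ∈ ℕ (every forward orbit of Φ_m eventually leaves (0, ∞)). -/
/-- For `m < 2`: `m − 1/t < t` for all `t > 0` (so `Φ_m` has no fixed point in `(0, ∞)`),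
and there is no sequence of positive reals with `t (n+1) = m − 1/(t n)` for all `n`
(every forward orbit of `Φ_m` eventually leaves `(0, ∞)`). -/
theorem Phi_lt_two_no_positive_orbit (m : ℝ) (hm : m < 2) :
    (∀ t : ℝ, 0 < t → m - 1 / t < t) ∧
    ¬ ∃ t : ℕ → ℝ, (∀ n, 0 < t n) ∧ ∀ n, t (n + 1) = m - 1 / t n := by
  have key : ∀ t : ℝ, 0 < t → 2 ≤ t + 1 / t := by
    intro t ht
    have h : t + 1 / t - 2 = (t - 1) ^ 2 / t := by
      field_simp
      ring
    have h2 : 0 ≤ (t - 1) ^ 2 / t := by positivity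
    linarith
  refine ⟨fun t ht => by linarith [key t ht], ?_⟩
  rintro ⟨t, hpos, hrec⟩
  have hlin : ∀ n : ℕ, t n ≤ t 0 - n * (2 - m) := by
    intro n
    induction n with
    | zero => simp
    | succ k ih =>
      have h1 := key (t k) (hpos k)
      rw [hrec k]
      push_cast
      linarith
  obtain ⟨n, hn⟩ := exists_nat_gt (t 0 / (2 - m))
  rw [div_lt_iff₀ (by linarith)] at hn
  linarith [hlin n, hpos n]
end

section
/- Let f : ℝ → ℝ be a strictly increasing continuous bijection, let x ∈ ℝ and set y = f(x). Suppose f has left and right derivatives βᴸ > 0 and βᴿ > 0 at x, and left and right derivatives γᴸ > 0 and γᴿ > 0 at y. Then the function χ = f + f⁻¹ has right derivative γᴿ + 1/βᴿ and left derivative γᴸ + 1/βᴸ at the point y. In particular, if γᴿ + 1/βᴿ = γᴸ + 1/βᴸ, then χ is differentiable at y. -/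
open Set

lemma invFun_hasDerivWithinAt_aux (f : ℝ → ℝ) (hb : Function.Bijective f)
    (x β : ℝ) (hβ : 0 < β) (s t : Set ℝ) (hxs : x ∉ s) (hxt : f x ∉ t)
    (hg : Continuous (Function.invFun f))
    (hst : ∀ z ∈ t, Function.invFun f z ∈ s)
    (hf : HasDerivWithinAt f β s x) :
    HasDerivWithinAt (Function.invFun f) (1 / β) t (f x) := by
  have hl : Function.invFun f (f x) = x := Function.leftInverse_invFun hb.1 x
  have hr : ∀ z, f (Function.invFun f z) = z := Function.rightInverse_invFun hb.2
  rw [hasDerivWithinAt_iff_tendsto_slope' hxs] at hf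
  rw [hasDerivWithinAt_iff_tendsto_slope' hxt]
  have hT : Filter.Tendsto (Function.invFun f) (nhdsWithin (f x) t) (nhdsWithin x s) := by
    refine tendsto_nhdsWithin_iff.2 ⟨?_, ?_⟩
    · have := hg.tendsto (f x)
      rw [hl] at this
      exact this.mono_left nhdsWithin_le_nhds
    · filter_upwards [self_mem_nhdsWithin] with z hz using hst z hz
  have := (hf.comp hT).inv₀ hβ.ne'
  rw [one_div]
  refine this.congr fun z => ?_
  simp [slope_def_field, hl, hr]

/-- The balancing identity. For a strictly increasing continuous bijection `f : ℝ → ℝ`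
with positive one-sided derivatives `βᴸ, βᴿ` at `x` and `γᴸ, γᴿ` at `y = f x`, the map
`χ = f + f⁻¹` has right derivative `γᴿ + 1/βᴿ` and left derivative `γᴸ + 1/βᴸ` at `y`;
in particular if these two numbers coincide, `χ` is differentiable at `y`. -/
theorem sum_with_inverse_one_sided_derivatives (f : ℝ → ℝ)
    (hc : Continuous f) (hm : StrictMono f) (hb : Function.Bijective f)
    (x βL βR γL γR : ℝ)
    (hβL : 0 < βL) (hβR : 0 < βR) (hγL : 0 < γL) (hγR : 0 < γR)
    (hfL : HasDerivWithinAt f βL (Set.Iio x) x)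
    (hfR : HasDerivWithinAt f βR (Set.Ioi x) x)
    (hgL : HasDerivWithinAt f γL (Set.Iio (f x)) (f x))
    (hgR : HasDerivWithinAt f γR (Set.Ioi (f x)) (f x)) :
    HasDerivWithinAt (fun t => f t + Function.invFun f t) (γR + 1 / βR)
        (Set.Ioi (f x)) (f x) ∧
    HasDerivWithinAt (fun t => f t + Function.invFun f t) (γL + 1 / βL)
        (Set.Iio (f x)) (f x) ∧
    (γR + 1 / βR = γL + 1 / βL →
      HasDerivAt (fun t => f t + Function.invFun f t) (γR + 1 / βR) (f x)) := by
  have hl : ∀ z, Function.invFun f (f z) = z := Function.leftInverse_invFun hb.1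
  have hr : ∀ z, f (Function.invFun f z) = z := Function.rightInverse_invFun hb.2
  have hgm : StrictMono (Function.invFun f) := fun a b hab => by
    rw [← hm.lt_iff_lt, hr, hr]
    exact hab
  have hg : Continuous (Function.invFun f) :=
    hgm.monotone.continuous_of_surjective fun z => ⟨f z, hl z⟩
  have hR : HasDerivWithinAt (fun t => f t + Function.invFun f t) (γR + 1 / βR)
      (Set.Ioi (f x)) (f x) :=
    hgR.add (invFun_hasDerivWithinAt_aux f hb x βR hβR (Set.Ioi x) _ (by simp) (by simp) hg
      (fun z hz => by simpa [hl] using hgm hz) hfR)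
  have hL : HasDerivWithinAt (fun t => f t + Function.invFun f t) (γL + 1 / βL)
      (Set.Iio (f x)) (f x) :=
    hgL.add (invFun_hasDerivWithinAt_aux f hb x βL hβL (Set.Iio x) _ (by simp) (by simp) hg
      (fun z hz => by simpa [hl] using hgm hz) hfL)
  refine ⟨hR, hL, fun h => ?_⟩
  rw [← h] at hL
  have := hL.Iic_of_Iio.union hR.Ici_of_Ioi
  rwa [Set.Iic_union_Ici, hasDerivWithinAt_univ] at this
end
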